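/- arXiv:0811.4288 — 2 statements merged into one kernel-verified Lean document; each statement's English description precedes it below -/
import Mathlib

section
/- For every Parry number β, the number of non-reciprocal irreducible factors in the factorization of the Parry polynomial n*_β over ℤ[X], counted with multiplicity (including the minimal polynomial P_β of β if it is non-reciprocal), is strictly less than Log ‖n*_β‖₂ / Log θ₀, where θ₀ = 1.3247… is the smallest Pisot number, i.e. the unique real root greater than 1 of X³ − X − 1. -/
open Polynomial

noncomputable section

/-- Iterates `T_β^j(1)` of the beta-transformation `T_β(x) = βx - ⌊βx⌋` at `1`. -/
def Titer (β : ℝ) : ℕ → ℝ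
  | 0 => 1
  | j + 1 => Int.fract (β * Titer β j)

/-- The digits `t_i = ⌊β · T_β^{i-1}(1)⌋` for `i ≥ 1` (junk value `0` at `i = 0`). -/
def tdigit (β : ℝ) : ℕ → ℤ
  | 0 => 0
  | i + 1 => ⌊β * Titer β i⌋

/-- The Parry polynomial of a simple Parry number with `d_β(1) = 0.t₁…t_m`. -/
def simpleParryPoly (β : ℝ) (m : ℕ) : Polynomial ℤ :=
  X ^ m - ∑ i ∈ Finset.Icc 1 m, C (tdigit β i) * X ^ (m - i)

/-- The Parry polynomial of a non-simple Parry number with preperiod `m`, period `p+1`. -/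
def nonsimpleParryPoly (β : ℝ) (m p : ℕ) : Polynomial ℤ :=
  X ^ (m + p + 1) - ∑ i ∈ Finset.Icc 1 (m + p + 1), C (tdigit β i) * X ^ (m + p + 1 - i)
    - X ^ m + ∑ i ∈ Finset.Icc 1 m, C (tdigit β i) * X ^ (m - i)

/-- `β` is a Parry number (non-integer, `> 1`, with eventually periodic digit sequence
`(t_i)`) and `P` is its Parry polynomial: either `β` is a simple Parry number with
`d_β(1) = 0.t₁…t_m` (`m` maximal with `t_m ≠ 0`), or `β` is a non-simple Parry number with
minimal preperiod length `m ≥ 0` and minimal period length `p+1 ≥ 1`. -/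
def IsParryPolyOf (β : ℝ) (P : Polynomial ℤ) : Prop :=
  1 < β ∧ (∀ n : ℤ, (n : ℝ) ≠ β) ∧
  ((∃ m : ℕ, 1 ≤ m ∧ tdigit β m ≠ 0 ∧ (∀ i, m < i → tdigit β i = 0) ∧
      P = simpleParryPoly β m) ∨
   ((∀ N : ℕ, ∃ i, N < i ∧ tdigit β i ≠ 0) ∧
    ∃ m p : ℕ,
      (∀ i, m + 1 ≤ i → tdigit β (i + (p + 1)) = tdigit β i) ∧
      (∀ q : ℕ, 0 < q → (∃ m', ∀ i, m' + 1 ≤ i → tdigit β (i + q) = tdigit β i) →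
        p + 1 ≤ q) ∧
      (∀ m', m' < m → ¬ (∀ i, m' + 1 ≤ i → tdigit β (i + (p + 1)) = tdigit β i)) ∧
      P = nonsimpleParryPoly β m p))

/-- The 2-norm of an integer polynomial. -/
def polyNorm2 (P : Polynomial ℤ) : ℝ :=
  Real.sqrt (∑ j ∈ Finset.range (P.natDegree + 1), ((P.coeff j : ℝ)) ^ 2)

/-- Number of non-reciprocal polynomials in the multiset `F`, counted with multiplicity.
A polynomial `g` (of degree `n`, with nonzero constant term) is reciprocal when
`g* = g`, where `g*(X) = Xⁿ·g(1/X)` is the reciprocal polynomial, i.e. `g.reverse = g`. -/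
def countNonReciprocal (F : Multiset (Polynomial ℤ)) : ℕ :=
  Multiset.card (@Multiset.filter (Polynomial ℤ)
    (fun g => ¬ g.reverse = g) (Classical.decPred _) F)

/-!
Write `M` for the Mahler measure. If a monic `g ∈ ℤ[X]` is not reciprocal and `g(0) g(1) ≠ 0`,
Smyth's theorem gives `M(g)³ ≥ M(g) + 1`, that is `M(g) ≥ θ₀`. A Parry polynomial `P` has
`P(0) ≠ 0` and `P(1) < 0`, so by multiplicativity of `M` and Landau's inequality, which is strict
here, `θ₀ ^ k ≤ M(P) < ‖P‖₂`, with `k` the number of non-reciprocal factors.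

For Smyth's theorem one may assume `g(0) = ±1`, as otherwise `M(g) ≥ |g(0)| ≥ 2`. Collect the roots
of `g` inside and outside the unit disc into two finite Blaschke products. This writes the power
series `f = g(0) g / g*`, which has integer coefficients and `f(0) = 1`, as a quotient `G / H` of
real power series bounded by `1` on the disc, with `H(0) = c = 1 / M(g)`.
Since `f` is not constant, comparing the first coefficients of `G` and `f H` and using that a
function bounded by `1` has a contractive Toeplitz matrix forces `c³ + c² ≤ 1`.
-/

open scoped PowerSeries

section SchurSeries

variable {K : Type*} [NormedField K]

/-- A Schur series: multiplication by `b` does not increase the `ℓ²` norms of truncations. Over `ℂ`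
these are the Taylor series of the holomorphic maps from the open unit disc to the closed one. -/
def IsSchurSeries (b : K⟦X⟧) : Prop :=
  ∀ (p : K⟦X⟧) (N : ℕ), ∑ i ∈ Finset.range N, ‖PowerSeries.coeff i (b * p)‖ ^ 2 ≤
    ∑ i ∈ Finset.range N, ‖PowerSeries.coeff i p‖ ^ 2

namespace IsSchurSeries

lemma C {u : K} (hu : ‖u‖ ≤ 1) : IsSchurSeries (PowerSeries.C u) := fun p N ↦
  Finset.sum_le_sum fun i _ ↦ by
    rw [PowerSeries.coeff_C_mul, norm_mul]
    gcongr
    exact mul_le_of_le_one_left (norm_nonneg _) hu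

lemma mul {a b : K⟦X⟧} (ha : IsSchurSeries a) (hb : IsSchurSeries b) : IsSchurSeries (a * b) :=
  fun p N ↦ by
    rw [mul_assoc]
    exact (ha _ N).trans (hb p N)

lemma one : IsSchurSeries (1 : K⟦X⟧) := by
  simpa using C (K := K) norm_one.le

lemma norm_coeff_mul_mul_sq_le {b : K⟦X⟧} (hb : IsSchurSeries b) (p q : K⟦X⟧) (N : ℕ) :
    ‖PowerSeries.coeff N (b * p * q)‖ ^ 2 ≤
      (∑ i ∈ Finset.range (N + 1), ‖PowerSeries.coeff i p‖ ^ 2) *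
        ∑ i ∈ Finset.range (N + 1), ‖PowerSeries.coeff i q‖ ^ 2 := by
  calc ‖PowerSeries.coeff N (b * p * q)‖ ^ 2
      ≤ (∑ i ∈ Finset.range (N + 1),
          ‖PowerSeries.coeff i (b * p)‖ * ‖PowerSeries.coeff (N - i) q‖) ^ 2 := by
        rw [PowerSeries.coeff_mul, Finset.Nat.sum_antidiagonal_eq_sum_range_succ_mk]
        gcongr
        exact norm_sum_le_of_le _ fun i _ ↦ (norm_mul _ _).le
    _ ≤ (∑ i ∈ Finset.range (N + 1), ‖PowerSeries.coeff i (b * p)‖ ^ 2) *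
          ∑ i ∈ Finset.range (N + 1), ‖PowerSeries.coeff (N - i) q‖ ^ 2 :=
        Finset.sum_mul_sq_le_sq_mul_sq _ _ _
    _ ≤ _ := by
        rw [Finset.sum_range_reflect (fun i ↦ ‖PowerSeries.coeff i q‖ ^ 2) (N + 1) |>.symm]
        exact mul_le_mul_of_nonneg_right (hb p (N + 1)) (by positivity)

end IsSchurSeries

/-- The coefficientwise real part of a complex power series. -/
def rePart (g : ℂ⟦X⟧) : ℝ⟦X⟧ :=
  PowerSeries.mk fun i ↦ (PowerSeries.coeff i g).re

lemma coeff_rePart (g : ℂ⟦X⟧) (i : ℕ) :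
    PowerSeries.coeff i (rePart g) = (PowerSeries.coeff i g).re :=
  PowerSeries.coeff_mk _ _

lemma rePart_mul_map_ofReal (g : ℂ⟦X⟧) (p : ℝ⟦X⟧) :
    rePart (g * PowerSeries.map Complex.ofRealHom p) = rePart g * p := by
  ext n
  simp [coeff_rePart, PowerSeries.coeff_mul, Complex.re_sum]

lemma IsSchurSeries.rePart {g : ℂ⟦X⟧} (hg : IsSchurSeries g) : IsSchurSeries (rePart g) := by
  intro p N
  rw [← rePart_mul_map_ofReal]
  calc _ ≤ ∑ i ∈ Finset.range N,
        ‖PowerSeries.coeff i (g * PowerSeries.map Complex.ofRealHom p)‖ ^ 2 := by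
        gcongr with i
        rw [coeff_rePart]
        exact Complex.abs_re_le_norm _
    _ ≤ _ := hg _ N
    _ = _ := by simp

end SchurSeries

lemma IsSchurSeries.abs_sum_sum_le {b : ℝ⟦X⟧} (hb : IsSchurSeries b) {ι : Type*} [Fintype ι]
    {e : ι → ℕ} (he : e.Injective) (v : ι → ℝ) (N : ℕ) :
    |∑ j, ∑ l, if e j + e l ≤ N then v j * v l * PowerSeries.coeff (N - (e j + e l)) b else 0| ≤
      ∑ j, v j ^ 2 := by
  classical
  set p : ℝ⟦X⟧ := ∑ j, PowerSeries.C (v j) * PowerSeries.X ^ e j with hp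
  have hcoeff : PowerSeries.coeff N (b * p * p) =
      ∑ j, ∑ l, if e j + e l ≤ N then
        v j * v l * PowerSeries.coeff (N - (e j + e l)) b else 0 := by
    rw [mul_assoc, hp, Finset.sum_mul_sum, Finset.mul_sum, map_sum]
    refine Finset.sum_congr rfl fun j _ ↦ ?_
    rw [Finset.mul_sum, map_sum]
    refine Finset.sum_congr rfl fun l _ ↦ ?_
    rw [show b * (PowerSeries.C (v j) * PowerSeries.X ^ e j *
        (PowerSeries.C (v l) * PowerSeries.X ^ e l)) =
        PowerSeries.C (v j * v l) * (PowerSeries.X ^ (e j + e l) * b) by rw [map_mul]; ring,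
      PowerSeries.coeff_C_mul, PowerSeries.coeff_X_pow_mul', mul_ite, mul_zero]
  have hsq (i : ℕ) : ‖PowerSeries.coeff i p‖ ^ 2 = ∑ j, if i = e j then v j ^ 2 else 0 := by
    simp only [hp, map_sum, PowerSeries.coeff_C_mul, PowerSeries.coeff_X_pow, mul_ite, mul_one,
      mul_zero, Real.norm_eq_abs, sq_abs]
    by_cases hi : ∃ j, e j = i
    · obtain ⟨j, rfl⟩ := hi
      simp [he.eq_iff]
    · have hne (j : ι) : i ≠ e j := fun h ↦ hi ⟨j, h.symm⟩
      simp [hne]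
  have hnorm : ∑ i ∈ Finset.range (N + 1), ‖PowerSeries.coeff i p‖ ^ 2 ≤ ∑ j, v j ^ 2 := by
    simp only [hsq]
    rw [Finset.sum_comm]
    gcongr with j
    rw [Finset.sum_ite_eq']
    split_ifs
    exacts [le_rfl, sq_nonneg _]
  have hform := hb.norm_coeff_mul_mul_sq_le p p N
  rw [← sq, sq_le_sq₀ (by positivity) (by positivity), hcoeff] at hform
  exact hform.trans hnorm

namespace IsSchurSeries

variable {b : ℝ⟦X⟧} {i k : ℕ}

lemma abs_coeff_le (hb : IsSchurSeries b) (hk : 0 < k) :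
    |PowerSeries.coeff k b| ≤ 1 - PowerSeries.coeff 0 b ^ 2 := by
  have he : StrictMono ![0, k] := by simpa using hk
  have hform (s : ℝ) :
      |PowerSeries.coeff k b + 2 * s * PowerSeries.coeff 0 b| ≤ 1 + s ^ 2 := by
    convert hb.abs_sum_sum_le he.injective ![1, s] k using 2
    · simp [Fin.sum_univ_two, hk.ne', -PowerSeries.coeff_zero_eq_constantCoeff]
      ring
    · simp [Fin.sum_univ_two]
  have hupper := (abs_le.mp (hform (PowerSeries.coeff 0 b))).2
  have hlower := (abs_le.mp (hform (-PowerSeries.coeff 0 b))).1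
  rw [abs_le]
  constructor <;> linarith

lemma abs_form_three_le (hb : IsSchurSeries b) (hk : 0 < k) (s t : ℝ) :
    |PowerSeries.coeff (2 * k) b + 2 * t * PowerSeries.coeff k b +
      (2 * s + t ^ 2) * PowerSeries.coeff 0 b| ≤ 1 + t ^ 2 + s ^ 2 := by
  have he : StrictMono ![0, k, 2 * k] := by simpa using ⟨hk, by omega⟩
  convert hb.abs_sum_sum_le he.injective ![1, t, s] (2 * k) using 2
  · have h₁ : k + k = 2 * k := by omega
    have h₂ : 2 * k - k = k := by omega
    have h₃ : k ≤ 2 * k := by omega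
    simp [Fin.sum_univ_three, h₁, h₂, h₃, hk.ne', -PowerSeries.coeff_zero_eq_constantCoeff]
    ring
  · simp [Fin.sum_univ_three]

lemma coeff_two_mul_add_le (hb : IsSchurSeries b) (hk : 0 < k) (t : ℝ) :
    PowerSeries.coeff (2 * k) b + 2 * t * PowerSeries.coeff k b ≤
      1 - PowerSeries.coeff 0 b ^ 2 + t ^ 2 * (1 - PowerSeries.coeff 0 b) := by
  linarith [(abs_le.mp (hb.abs_form_three_le hk (PowerSeries.coeff 0 b) t)).2]

lemma neg_le_coeff_two_mul_add (hb : IsSchurSeries b) (hk : 0 < k) (t : ℝ) :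
    -(1 - PowerSeries.coeff 0 b ^ 2 + t ^ 2 * (1 + PowerSeries.coeff 0 b)) ≤
      PowerSeries.coeff (2 * k) b + 2 * t * PowerSeries.coeff k b := by
  linarith [(abs_le.mp (hb.abs_form_three_le hk (-PowerSeries.coeff 0 b) t)).1]

lemma abs_form_four_le (hb : IsSchurSeries b) (hi : 0 < i) (hik : i < k) (s t u : ℝ) :
    |PowerSeries.coeff (k + i) b + 2 * s * PowerSeries.coeff k b +
      2 * t * PowerSeries.coeff i b + s ^ 2 * PowerSeries.coeff (k - i) b +
      2 * (u + s * t) * PowerSeries.coeff 0 b| ≤ 1 + s ^ 2 + t ^ 2 + u ^ 2 := by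
  have he : StrictMono ![0, i, k, k + i] := by simpa using ⟨hi, hik, hi⟩
  convert hb.abs_sum_sum_le he.injective ![1, s, t, u] (k + i) using 2
  · have h₁ : ¬ k + k ≤ k + i := by omega
    have h₂ : i + k = k + i := by omega
    have h₃ : k + i - (i + i) = k - i := by omega
    simp [Fin.sum_univ_four, h₁, h₂, h₃, hi.ne', hik.le, (hi.trans hik).ne',
      -PowerSeries.coeff_zero_eq_constantCoeff]
    ring
  · simp [Fin.sum_univ_four]

end IsSchurSeries

section SmythCore

variable {G H : ℝ⟦X⟧} {k : ℕ} {c : ℝ}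

lemma cube_add_sq_le_one_of_coeff_two_mul (hG : IsSchurSeries G) (hH : IsSchurSeries H)
    (hc : 0 < c) (hG₀ : PowerSeries.coeff 0 G = c) (hH₀ : PowerSeries.coeff 0 H = c) (hk : 0 < k)
    {σ y : ℝ} (hσ : σ ^ 2 = 1) (hGk : PowerSeries.coeff k G = σ * y)
    (hHk : PowerSeries.coeff k H = σ * (y - c))
    (hle : y ≤ PowerSeries.coeff (2 * k) G - PowerSeries.coeff (2 * k) H) :
    c ^ 3 + c ^ 2 ≤ 1 := by
  have hσ₁ : |σ| = 1 := by rwa [← sq_eq_sq₀ (abs_nonneg σ) zero_le_one, sq_abs, one_pow]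
  have hy : c - (1 - c ^ 2) ≤ y := by
    have := hH.abs_coeff_le hk
    rw [hHk, hH₀, abs_mul, hσ₁, one_mul] at this
    linarith [(abs_le.mp this).1]
  -- These test vectors are optimal when `c ^ 3 + c ^ 2 = 1`.
  have hupper := hG.coeff_two_mul_add_le hk (σ * (c * (1 + c)))
  have hlower := hH.neg_le_coeff_two_mul_add hk (σ * (1 - c))
  rw [hG₀, hGk] at hupper
  rw [hH₀, hHk] at hlower
  have hsum : (2 * c ^ 2 + 4 * c - 1) * (y - (c + c ^ 2 - 1)) ≤
      (1 - c ^ 2 - c ^ 3) * (c ^ 2 + 2 * c + 2) := by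
    linear_combination hle + hupper + hlower +
      ((c * (1 + c)) ^ 2 * (1 - c) - 2 * c * (1 + c) * y + (1 - c) ^ 2 * (1 + c) +
        2 * (1 - c) * (y - c)) * hσ
  by_contra! hlt
  have hc' : 1 / 2 < c := by
    by_contra! hle'
    nlinarith [mul_nonneg hc.le hc.le]
  nlinarith [mul_nonneg (show 0 ≤ 2 * c ^ 2 + 4 * c - 1 by nlinarith)
    (show 0 ≤ y - (c + c ^ 2 - 1) by linarith)]

lemma abs_add_mul_le_of_coeff_add (hG : IsSchurSeries G) (hH : IsSchurSeries H)
    (hG₀ : PowerSeries.coeff 0 G = c)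
    (hlow : ∀ j < k, PowerSeries.coeff j G = PowerSeries.coeff j H)
    (hGk : PowerSeries.coeff k G = PowerSeries.coeff k H + c) {i : ℕ} (hi : 0 < i) (hik : i < k)
    {a : ℝ} (hGki : PowerSeries.coeff (k + i) G =
      PowerSeries.coeff (k + i) H + PowerSeries.coeff i H + a * c) (m : ℝ) :
    |(1 + 4 * m) * PowerSeries.coeff i H + a * c| ≤
      2 - 2 * c ^ 2 + 2 * m ^ 2 - c ^ 2 * (1 + 2 * m) ^ 2 / 2 := by
  have hH₀ : PowerSeries.coeff 0 H = c := by rw [← hlow 0 (hi.trans hik), hG₀]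
  have hG' (s u : ℝ) := abs_le.mp (hG.abs_form_four_le hi hik s m u)
  have hH' (s u : ℝ) := abs_le.mp (hH.abs_form_four_le hi hik s (-m) u)
  simp only [hG₀, hGk, hGki, hlow i hik, hlow (k - i) (by omega)] at hG'
  simp only [hH₀] at hH'
  -- The optimal `s` and `u`, up to sign.
  set s := c * (1 + 2 * m) / 2
  rw [abs_le]
  constructor
  · linear_combination (hG' (-s) (-c)).1 + (hH' (-s) c).2
  · linear_combination (hG' s c).2 + (hH' s (-c)).1

lemma cube_add_sq_le_one_of_le (hc : 0 < c) (h : c ≤ 0.7548) : c ^ 3 + c ^ 2 ≤ 1 := by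
  calc c ^ 3 + c ^ 2 ≤ 0.7548 ^ 3 + 0.7548 ^ 2 := by gcongr
    _ ≤ 1 := by norm_num

lemma cube_add_sq_le_one_of_coeff_add (hG : IsSchurSeries G) (hH : IsSchurSeries H)
    (hc : 0 < c) (hG₀ : PowerSeries.coeff 0 G = c)
    (hlow : ∀ j < k, PowerSeries.coeff j G = PowerSeries.coeff j H)
    (hGk : PowerSeries.coeff k G = PowerSeries.coeff k H + c) {i : ℕ} (hi : 0 < i) (hik : i < k)
    {a : ℤ} (ha : a ≠ 0) (hGki : PowerSeries.coeff (k + i) G =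
      PowerSeries.coeff (k + i) H + PowerSeries.coeff i H + a * c) :
    c ^ 3 + c ^ 2 ≤ 1 := by
  have hbound := abs_add_mul_le_of_coeff_add hG hH hG₀ hlow hGk hi hik hGki
  refine cube_add_sq_le_one_of_le hc ?_
  obtain ha₁ | ha₂ : |a| = 1 ∨ 2 ≤ |a| := by
    have := abs_pos.mpr ha
    omega
  · -- `m = 1 / 5` and `m = 9 / 8` give nearly the best bound after eliminating `coeff i H`.
    have hquad : (37 / 99) * c + (5 / 9 * 2.98 + 2 / 11 * 7.28125) * c ^ 2 ≤
        5 / 9 * 2.08 + 2 / 11 * 4.53125 := by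
      have h₁ := abs_le.mp (hbound (1 / 5))
      have h₂ := abs_le.mp (hbound (9 / 8))
      rcases eq_or_eq_neg_of_abs_eq ha₁ with rfl | rfl
      · push_cast at h₁ h₂
        linarith [h₁.2, h₂.1]
      · push_cast at h₁ h₂
        linarith [h₁.1, h₂.2]
    nlinarith
  · have ha₂' : (2 : ℝ) ≤ |(a : ℝ)| := by exact_mod_cast ha₂
    have h := hbound (-1 / 4)
    rw [show (1 + 4 * (-1 / 4 : ℝ)) = 0 by norm_num, zero_mul, zero_add, abs_mul,
      abs_of_pos hc] at h
    nlinarith [mul_le_mul_of_nonneg_right ha₂' hc.le]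

lemma cube_add_sq_le_one_of_coeff_eq_add (hG : IsSchurSeries G) (hH : IsSchurSeries H)
    (hc : 0 < c) (hG₀ : PowerSeries.coeff 0 G = c)
    (hlow : ∀ j < k, PowerSeries.coeff j G = PowerSeries.coeff j H)
    (hGk : PowerSeries.coeff k G = PowerSeries.coeff k H + c) {i : ℕ} (hi : 0 < i) (hik : i ≤ k)
    {a : ℤ} (ha : i < k → a ≠ 0) (hGki : PowerSeries.coeff (k + i) G =
      PowerSeries.coeff (k + i) H + PowerSeries.coeff i H + a * c) :
    c ^ 3 + c ^ 2 ≤ 1 := by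
  rcases hik.lt_or_eq with hlt | rfl
  · exact cube_add_sq_le_one_of_coeff_add hG hH hc hG₀ hlow hGk hi hlt (ha hlt) hGki
  have hH₀ : PowerSeries.coeff 0 H = c := by rw [← hlow 0 hi, hG₀]
  rw [← two_mul] at hGki
  rcases lt_or_ge 0 a with ha₁ | ha₁
  · have ha₁' : (1 : ℝ) ≤ a := by exact_mod_cast ha₁
    refine cube_add_sq_le_one_of_coeff_two_mul hG hH hc hG₀ hH₀ hi (σ := 1)
      (y := PowerSeries.coeff i H + c) (by norm_num) (by linarith) (by ring) ?_
    nlinarith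
  · have ha₁' : (a : ℝ) ≤ 0 := by exact_mod_cast ha₁
    refine cube_add_sq_le_one_of_coeff_two_mul hH hG hc hH₀ hG₀ hi (σ := -1)
      (y := -PowerSeries.coeff i H) (by norm_num) (by ring) (by linarith) ?_
    nlinarith

lemma cube_add_sq_le_one_of_coeff_eq_mul_add (hG : IsSchurSeries G) (hH : IsSchurSeries H)
    (hc : 0 < c) (hG₀ : PowerSeries.coeff 0 G = c)
    (hlow : ∀ j < k, PowerSeries.coeff j G = PowerSeries.coeff j H) {b : ℤ} (hb : b ≠ 0)
    (hGk : PowerSeries.coeff k G = PowerSeries.coeff k H + b * c) {i : ℕ} (hi : 0 < i)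
    (hik : i ≤ k) {a : ℤ} (ha : i < k → a ≠ 0) (hGki : PowerSeries.coeff (k + i) G =
      PowerSeries.coeff (k + i) H + b * PowerSeries.coeff i H + a * c) :
    c ^ 3 + c ^ 2 ≤ 1 := by
  have hk : 0 < k := hi.trans_le hik
  have hH₀ : PowerSeries.coeff 0 H = c := by rw [← hlow 0 hk, hG₀]
  obtain rfl | rfl | hb₂ : b = 1 ∨ b = -1 ∨ 2 ≤ |b| := by
    rcases abs_cases b <;> omega
  · exact cube_add_sq_le_one_of_coeff_eq_add hG hH hc hG₀ hlow (by simpa using hGk) hi hik ha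
      (by simpa using hGki)
  · have hHk : PowerSeries.coeff k H = PowerSeries.coeff k G + c := by
      rw [hGk]; push_cast; ring
    have hlow' (j : ℕ) (hj : j < k) := (hlow j hj).symm
    rcases hik.lt_or_eq with hlt | rfl
    · refine cube_add_sq_le_one_of_coeff_eq_add hH hG hc hH₀ hlow' hHk hi hik (a := -a)
        (fun h ↦ neg_ne_zero.mpr (ha h)) ?_
      rw [hGki, hlow i hlt]; push_cast; ring
    · refine cube_add_sq_le_one_of_coeff_eq_add hH hG hc hH₀ hlow' hHk hi hik (a := 1 - a)
        (fun h ↦ absurd h (lt_irrefl i)) ?_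
      rw [hGki, hGk]; push_cast; ring
  · have hb₂' : (2 : ℝ) ≤ |(b : ℝ)| := by exact_mod_cast hb₂
    have hbc : |(b : ℝ)| * c ≤ 2 * (1 - c ^ 2) := by
      rw [← abs_of_pos hc, ← abs_mul, abs_of_pos hc, ← sub_eq_of_eq_add' hGk]
      have hGk' := hG.abs_coeff_le hk
      have hHk' := hH.abs_coeff_le hk
      rw [hG₀] at hGk'
      rw [hH₀] at hHk'
      linarith [abs_sub (PowerSeries.coeff k G) (PowerSeries.coeff k H)]
    nlinarith [mul_le_mul_of_nonneg_right hb₂' hc.le]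

end SmythCore

section OrderDecomposition

variable {R : Type*} [CommRing R]

lemma exists_eq_X_pow_mul_coeff_zero_ne_zero {t : R⟦X⟧} (ht : t ≠ 0) :
    ∃ (k : ℕ) (r : R⟦X⟧), t = PowerSeries.X ^ k * r ∧ PowerSeries.coeff 0 r ≠ 0 := by
  refine ⟨_, _, PowerSeries.X_pow_order_mul_divXPowOrder.symm, ?_⟩
  rwa [PowerSeries.coeff_zero_eq_constantCoeff_apply, Ne,
    PowerSeries.constantCoeff_divXPowOrder_eq_zero_iff]

lemma exists_eq_C_add_X_pow_mul (s : R⟦X⟧) {k : ℕ} (hk : 0 < k) :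
    ∃ i r, 0 < i ∧ i ≤ k ∧ s = PowerSeries.C (PowerSeries.coeff 0 s) + PowerSeries.X ^ i * r ∧
      (i < k → PowerSeries.coeff 0 r ≠ 0) := by
  set t := s - PowerSeries.C (PowerSeries.coeff 0 s) with ht
  have hs : s = PowerSeries.C (PowerSeries.coeff 0 s) + t := (add_sub_cancel _ _).symm
  by_cases hdvd : PowerSeries.X ^ k ∣ t
  · obtain ⟨r, hr⟩ := hdvd
    exact ⟨k, r, hk, le_rfl, hr ▸ hs, fun h ↦ absurd h (lt_irrefl k)⟩
  · obtain ⟨i, r, hr, hr₀⟩ :=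
      exists_eq_X_pow_mul_coeff_zero_ne_zero (t := t) fun h ↦ hdvd (h ▸ dvd_zero _)
    have hik : i < k := by
      contrapose! hdvd
      exact (pow_dvd_pow _ hdvd).trans ⟨r, hr⟩
    refine ⟨i, r, Nat.pos_of_ne_zero fun hi ↦ hr₀ ?_, hik.le, hr ▸ hs, fun _ ↦ hr₀⟩
    rw [hi, pow_zero, one_mul] at hr
    simp [← hr, ht]

end OrderDecomposition

theorem cube_add_sq_le_one_of_eq_map_mul {G H : ℝ⟦X⟧} (hG : IsSchurSeries G)
    (hH : IsSchurSeries H) {f : ℤ⟦X⟧} (hf₀ : PowerSeries.coeff 0 f = 1) (hf : f ≠ 1)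
    (hGH : G = PowerSeries.map (Int.castRingHom ℝ) f * H) {c : ℝ} (hc : 0 < c)
    (hH₀ : PowerSeries.coeff 0 H = c) : c ^ 3 + c ^ 2 ≤ 1 := by
  obtain ⟨k, s, hs, hs₀⟩ := exists_eq_X_pow_mul_coeff_zero_ne_zero (sub_ne_zero.mpr hf)
  have hk : 0 < k := Nat.pos_of_ne_zero fun hk ↦ hs₀ (by
    rw [hk, pow_zero, one_mul] at hs
    simp [← hs, -PowerSeries.coeff_zero_eq_constantCoeff, hf₀])
  obtain ⟨i, r, hi, hik, hr, hr₀⟩ := exists_eq_C_add_X_pow_mul s hk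
  have hcoeff (n : ℕ) : PowerSeries.coeff n G = PowerSeries.coeff n H +
      (if k ≤ n then PowerSeries.coeff 0 s * PowerSeries.coeff (n - k) H else 0) +
      if k + i ≤ n then PowerSeries.coeff (n - (k + i))
        (PowerSeries.map (Int.castRingHom ℝ) r * H) else 0 := by
    have hexp : G = H +
        PowerSeries.X ^ k * (PowerSeries.C (Int.castRingHom ℝ (PowerSeries.coeff 0 s)) * H) +
        PowerSeries.X ^ (k + i) * (PowerSeries.map (Int.castRingHom ℝ) r * H) := by
      rw [hGH, sub_eq_iff_eq_add.mp hs]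
      nth_rw 1 [hr]
      simp only [map_add, map_mul, map_pow, map_one, PowerSeries.map_X, PowerSeries.map_C]
      ring
    rw [hexp]
    simp only [map_add, PowerSeries.coeff_X_pow_mul', PowerSeries.coeff_C_mul, eq_intCast]
  refine cube_add_sq_le_one_of_coeff_eq_mul_add hG hH hc (k := k) (i := i) ?_ (fun j hj ↦ ?_) hs₀ ?_
    hi hik hr₀ ?_
  · simp [hcoeff, hk.ne', ← hH₀]
  · simp [hcoeff, hj.not_ge, (hj.trans_le (Nat.le_add_right k i)).not_ge]
  · simp [hcoeff, hi.ne', ← hH₀]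
  · simp [hcoeff, ← hH₀, PowerSeries.coeff_mul, -PowerSeries.coeff_zero_eq_constantCoeff]

open ComplexConjugate

section Blaschke

lemma norm_sub_conj_mul_sq_sub (a p q : ℂ) :
    ‖p - conj a * q‖ ^ 2 - ‖q - a * p‖ ^ 2 = (1 - ‖a‖ ^ 2) * (‖p‖ ^ 2 - ‖q‖ ^ 2) := by
  simp only [← Complex.normSq_eq_norm_sq, Complex.normSq_apply, Complex.sub_re, Complex.sub_im,
    Complex.mul_re, Complex.mul_im, Complex.conj_re, Complex.conj_im]
  ring

lemma mul_sum_norm_sq_sub_sum_norm_sq_nonneg {a : ℂ} {p q : ℂ⟦X⟧}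
    (h : (1 + PowerSeries.C (conj a) * PowerSeries.X) * q =
      (PowerSeries.X + PowerSeries.C a) * p) (N : ℕ) :
    0 ≤ (1 - ‖a‖ ^ 2) * (∑ i ∈ Finset.range N, ‖PowerSeries.coeff i p‖ ^ 2 -
      ∑ i ∈ Finset.range N, ‖PowerSeries.coeff i q‖ ^ 2) := by
  have hzero : PowerSeries.coeff 0 q - a * PowerSeries.coeff 0 p = 0 := by
    have := congrArg (PowerSeries.coeff 0) h
    simp only [add_mul, mul_assoc, map_add, one_mul, PowerSeries.coeff_C_mul,
      PowerSeries.coeff_zero_X_mul] at this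
    linear_combination this
  have hsucc (n : ℕ) : PowerSeries.coeff (n + 1) q - a * PowerSeries.coeff (n + 1) p =
      PowerSeries.coeff n p - conj a * PowerSeries.coeff n q := by
    have := congrArg (PowerSeries.coeff (n + 1)) h
    simp only [add_mul, mul_assoc, map_add, one_mul, PowerSeries.coeff_C_mul,
      PowerSeries.coeff_succ_X_mul] at this
    linear_combination this
  have htelescope (n : ℕ) : (1 - ‖a‖ ^ 2) *
      (∑ i ∈ Finset.range (n + 1), ‖PowerSeries.coeff i p‖ ^ 2 -
        ∑ i ∈ Finset.range (n + 1), ‖PowerSeries.coeff i q‖ ^ 2) =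
      ‖PowerSeries.coeff n p - conj a * PowerSeries.coeff n q‖ ^ 2 := by
    induction n with
    | zero =>
      have hid := norm_sub_conj_mul_sq_sub a (PowerSeries.coeff 0 p) (PowerSeries.coeff 0 q)
      rw [hzero, norm_zero] at hid
      rw [zero_add, Finset.sum_range_one, Finset.sum_range_one, ← hid]
      ring
    | succ n ih =>
      have hid := norm_sub_conj_mul_sq_sub a (PowerSeries.coeff (n + 1) p)
        (PowerSeries.coeff (n + 1) q)
      rw [hsucc, ← ih] at hid
      rw [Finset.sum_range_succ _ (n + 1), Finset.sum_range_succ _ (n + 1)]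
      linarith
  cases N with
  | zero => simp
  | succ n => rw [htelescope]; positivity

lemma one_add_C_mul_X_mul_inv (a : ℂ) :
    (1 + PowerSeries.C a * PowerSeries.X) * (1 + PowerSeries.C a * PowerSeries.X)⁻¹ = 1 :=
  PowerSeries.mul_inv_cancel _ (by simp)

lemma X_add_C_mul_inv {a : ℂ} (ha : a ≠ 0) :
    (PowerSeries.X + PowerSeries.C a) * (PowerSeries.X + PowerSeries.C a)⁻¹ = 1 :=
  PowerSeries.mul_inv_cancel _ (by simpa using ha)

lemma isSchurSeries_X_add_C_mul_inv {a : ℂ} (ha : ‖a‖ ≤ 1) :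
    IsSchurSeries ((PowerSeries.X + PowerSeries.C a) *
      (1 + PowerSeries.C (conj a) * PowerSeries.X)⁻¹) := by
  rcases ha.lt_or_eq with hlt | heq
  · intro p N
    have h := mul_sum_norm_sq_sub_sum_norm_sq_nonneg (a := a) (p := p)
      (q := (PowerSeries.X + PowerSeries.C a) *
        (1 + PowerSeries.C (conj a) * PowerSeries.X)⁻¹ * p)
      (by linear_combination (PowerSeries.X + PowerSeries.C a) * p *
        one_add_C_mul_X_mul_inv (conj a)) N
    have hpos : 0 < 1 - ‖a‖ ^ 2 := by nlinarith [norm_nonneg a]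
    linarith [nonneg_of_mul_nonneg_right h hpos]
  · have hunit : PowerSeries.C a * PowerSeries.C (conj a) = 1 := by
      rw [← map_mul, Complex.mul_conj, Complex.normSq_eq_norm_sq, heq]
      simp
    convert IsSchurSeries.C ha using 1
    linear_combination PowerSeries.C a * one_add_C_mul_X_mul_inv (conj a) -
      PowerSeries.X * (1 + PowerSeries.C (conj a) * PowerSeries.X)⁻¹ * hunit

lemma isSchurSeries_one_add_C_mul_X_mul_inv {a : ℂ} (ha : 1 < ‖a‖) :
    IsSchurSeries ((1 + PowerSeries.C (conj a) * PowerSeries.X) *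
      (PowerSeries.X + PowerSeries.C a)⁻¹) := by
  intro p N
  have ha₀ : a ≠ 0 := norm_pos_iff.mp (zero_lt_one.trans ha)
  have h := mul_sum_norm_sq_sub_sum_norm_sq_nonneg (a := a) (q := p)
    (p := (1 + PowerSeries.C (conj a) * PowerSeries.X) *
      (PowerSeries.X + PowerSeries.C a)⁻¹ * p)
    (by linear_combination -(1 + PowerSeries.C (conj a) * PowerSeries.X) * p *
      X_add_C_mul_inv ha₀) N
  have hpos : 0 < ‖a‖ ^ 2 - 1 := by nlinarith
  nlinarith

end Blaschke

section SchurQuotient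

lemma reverse_map_of_injective {R S : Type*} [Semiring R] [Semiring S] {f : R →+* S}
    (hf : Function.Injective f) (p : R[X]) : (p.map f).reverse = p.reverse.map f := by
  rw [reverse, reverse, reflect_map, natDegree_map_eq_of_injective hf]

lemma reverse_X_add_C {R : Type*} [Semiring R] [Nontrivial R] (a : R) :
    (X + C a).reverse = 1 + C a * X := by
  rw [reverse, natDegree_X_add_C, reflect_add, reflect_one_X, reflect_C, pow_one]

/-- `p` is its conjugate reciprocal times a quotient `g / h` of Schur series, normalised so that
`h` takes the value `|leading coefficient of p| / M(p)` at the origin. -/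
def HasSchurQuotient (p : ℂ[X]) : Prop :=
  ∃ g h : ℂ⟦X⟧, IsSchurSeries g ∧ IsSchurSeries h ∧
    g * ((p.map (starRingEnd ℂ)).reverse : ℂ[X]) = h * p ∧
    p.mahlerMeasure * PowerSeries.coeff 0 h = ‖p.leadingCoeff‖

lemma hasSchurQuotient_C (a : ℂ) : HasSchurQuotient (C a) := by
  refine ⟨PowerSeries.C (a / conj a), 1, .C ?_, .one, ?_, ?_⟩
  · rw [norm_div, RCLike.norm_conj]
    exact div_self_le_one _
  · rw [map_C, reverse_C, coe_C, coe_C, ← map_mul, one_mul]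
    congr 1
    rcases eq_or_ne a 0 with rfl | ha
    · simp
    · exact div_mul_cancel₀ _ (by simpa using ha)
  · simp

lemma hasSchurQuotient_X_add_C (a : ℂ) : HasSchurQuotient (X + C a) := by
  rw [HasSchurQuotient, Polynomial.map_add, map_X, map_C, reverse_X_add_C, mahlerMeasure_X_add_C,
    leadingCoeff_X_add_C]
  simp only [coe_add, coe_mul, coe_one, coe_C, coe_X]
  rcases le_or_gt ‖a‖ 1 with ha | ha
  · refine ⟨_, 1, isSchurSeries_X_add_C_mul_inv ha, .one, ?_, ?_⟩
    · linear_combination (PowerSeries.X + PowerSeries.C a) * one_add_C_mul_X_mul_inv (conj a)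
    · simp [max_eq_left ha]
  · have ha₀ : a ≠ 0 := norm_pos_iff.mp (zero_lt_one.trans ha)
    -- The unimodular factor makes the constant coefficient of `h` positive.
    have hu : ‖a / ‖a‖‖ = 1 := by simp [ha₀]
    refine ⟨PowerSeries.C (a / ‖a‖), PowerSeries.C (a / ‖a‖) * _, .C hu.le,
      (IsSchurSeries.C hu.le).mul (isSchurSeries_one_add_C_mul_X_mul_inv ha), ?_, ?_⟩
    · linear_combination -PowerSeries.C (a / ‖a‖) *
        (1 + PowerSeries.C (conj a) * PowerSeries.X) * X_add_C_mul_inv ha₀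
    · have hnorm : (‖a‖ : ℂ) ≠ 0 := by simpa using ha₀
      simp only [max_eq_right ha.le, PowerSeries.coeff_zero_eq_constantCoeff, map_mul, map_add,
        PowerSeries.constantCoeff_one, PowerSeries.constantCoeff_C, PowerSeries.constantCoeff_X,
        PowerSeries.constantCoeff_inv, mul_zero, add_zero, zero_add, one_mul, norm_one,
        Complex.ofReal_one]
      field_simp

lemma HasSchurQuotient.mul {p q : ℂ[X]} (hp : HasSchurQuotient p) (hq : HasSchurQuotient q) :
    HasSchurQuotient (p * q) := by
  obtain ⟨g₁, h₁, hg₁, hh₁, hgh₁, hM₁⟩ := hp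
  obtain ⟨g₂, h₂, hg₂, hh₂, hgh₂, hM₂⟩ := hq
  refine ⟨g₁ * g₂, h₁ * h₂, hg₁.mul hg₂, hh₁.mul hh₂, ?_, ?_⟩
  · rw [Polynomial.map_mul, reverse_mul_of_domain, coe_mul, coe_mul, mul_mul_mul_comm, hgh₁, hgh₂,
      mul_mul_mul_comm]
  · rw [mahlerMeasure_mul, leadingCoeff_mul, norm_mul]
    push_cast
    rw [← hM₁, ← hM₂]
    simp only [PowerSeries.coeff_zero_eq_constantCoeff, map_mul]
    ring

theorem hasSchurQuotient (p : ℂ[X]) : HasSchurQuotient p := by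
  refine Submonoid.closure_induction ?_ ?_ (fun _ _ _ _ ↦ .mul) (IsAlgClosed.splits p)
  · rintro _ (⟨a, rfl⟩ | ⟨a, rfl⟩)
    exacts [hasSchurQuotient_C a, hasSchurQuotient_X_add_C a]
  · simpa using hasSchurQuotient_C 1

end SchurQuotient

section Smyth

lemma exists_coe_eq_mul_reverse {p : ℤ[X]} (hp : p.Monic) :
    ∃ f : ℤ⟦X⟧, (p : ℤ⟦X⟧) = f * (p.reverse : ℤ[X]) := by
  obtain ⟨r, hr⟩ : IsUnit ((p.reverse : ℤ[X]) : ℤ⟦X⟧) := by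
    rw [PowerSeries.isUnit_iff_constantCoeff, constantCoeff_coe, coeff_zero_reverse,
      hp.leadingCoeff]
    exact isUnit_one
  exact ⟨p * ↑r⁻¹, by rw [← hr, Units.inv_mul_cancel_right]⟩

lemma exists_isSchurSeries_map_mul_eq {p : ℤ[X]} (hp : p.Monic) {f : ℤ⟦X⟧}
    (hf : (p : ℤ⟦X⟧) = f * (p.reverse : ℤ[X])) :
    ∃ G H : ℝ⟦X⟧, IsSchurSeries G ∧ IsSchurSeries H ∧
      G = PowerSeries.map (Int.castRingHom ℝ) f * H ∧
      PowerSeries.coeff 0 H = (p.map (Int.castRingHom ℂ)).mahlerMeasure⁻¹ := by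
  have hcast : Function.Injective (Int.castRingHom ℂ) := RingHom.injective_int _
  obtain ⟨g, h, hg, hh, hgh, hM⟩ := hasSchurQuotient (p.map (Int.castRingHom ℂ))
  rw [Polynomial.map_map, RingHom.ext_int ((starRingEnd ℂ).comp _) (Int.castRingHom ℂ),
    reverse_map_of_injective hcast] at hgh
  have hrev₀ : ((p.reverse.map (Int.castRingHom ℂ) : ℂ[X]) : ℂ⟦X⟧) ≠ 0 := by
    rw [Ne, coe_eq_zero_iff, Polynomial.map_eq_zero_iff hcast, reverse_eq_zero]
    exact hp.ne_zero
  have hfC : ((p.map (Int.castRingHom ℂ) : ℂ[X]) : ℂ⟦X⟧) =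
      PowerSeries.map (Int.castRingHom ℂ) f * (p.reverse.map (Int.castRingHom ℂ) : ℂ[X]) := by
    rw [polynomial_map_coe, hf, map_mul, polynomial_map_coe]
  have hgf : g = h * PowerSeries.map Complex.ofRealHom (PowerSeries.map (Int.castRingHom ℝ) f) := by
    refine mul_right_cancel₀ hrev₀ ?_
    rw [hgh, hfC, mul_assoc, ← RingHom.comp_apply, ← PowerSeries.map_comp,
      RingHom.ext_int (Complex.ofRealHom.comp _) (Int.castRingHom ℂ)]
  refine ⟨rePart g, rePart h, hg.rePart, hh.rePart, ?_, ?_⟩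
  · rw [hgf, rePart_mul_map_ofReal, mul_comm]
  · rw [(hp.map _).leadingCoeff, norm_one, Complex.ofReal_one] at hM
    rw [coeff_rePart, eq_inv_of_mul_eq_one_right hM, ← Complex.ofReal_inv, Complex.ofReal_re]

theorem mahlerMeasure_add_one_le_cube_of_sq_eq_one {p : ℤ[X]} (hp : p.Monic)
    (hp₀ : p.coeff 0 ^ 2 = 1) (hrev : p.reverse ≠ C (p.coeff 0) * p) :
    (p.map (Int.castRingHom ℂ)).mahlerMeasure + 1 ≤
      (p.map (Int.castRingHom ℂ)).mahlerMeasure ^ 3 := by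
  set M := (p.map (Int.castRingHom ℂ)).mahlerMeasure
  have hM₀ : 0 < M := mahlerMeasure_pos_of_ne_zero (hp.map _).ne_zero
  obtain ⟨f, hf⟩ := exists_coe_eq_mul_reverse hp
  obtain ⟨G, H, hG, hH, hGH, hH₀⟩ := exists_isSchurSeries_map_mul_eq hp hf
  have hf₀ : PowerSeries.coeff 0 f = p.coeff 0 := by
    have h := congrArg (PowerSeries.coeff 0) hf
    simpa [hp.leadingCoeff] using h.symm
  have hbound : M⁻¹ ^ 3 + M⁻¹ ^ 2 ≤ 1 := by
    refine cube_add_sq_le_one_of_eq_map_mul (f := PowerSeries.C (p.coeff 0) * f)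
      ((IsSchurSeries.C (u := (p.coeff 0 : ℝ)) ?_).mul hG) hH ?_ (fun h ↦ hrev ?_) ?_
      (inv_pos.mpr hM₀) hH₀
    · rw [← sq_le_one_iff₀ (norm_nonneg _), Real.norm_eq_abs, sq_abs]
      exact_mod_cast hp₀.le
    · rw [PowerSeries.coeff_C_mul, hf₀, ← sq, hp₀]
    · rw [← coe_inj, coe_mul, coe_C, hf, ← mul_assoc, h, one_mul]
    · rw [hGH, map_mul, PowerSeries.map_C, mul_assoc, eq_intCast]
  calc M + 1 = M ^ 3 * (M⁻¹ ^ 3 + M⁻¹ ^ 2) := by field_simp; ring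
    _ ≤ M ^ 3 := mul_le_of_le_one_right (by positivity) hbound

theorem mahlerMeasure_add_one_le_cube {p : ℤ[X]} (hp : p.Monic)
    (hp₀ : p.coeff 0 ≠ 0) (hp₁ : p.eval 1 ≠ 0) (hrev : p.reverse ≠ p) :
    (p.map (Int.castRingHom ℂ)).mahlerMeasure + 1 ≤
      (p.map (Int.castRingHom ℂ)).mahlerMeasure ^ 3 := by
  rcases (Int.one_le_abs hp₀).eq_or_lt with hunit | hlarge
  · have hsq : p.coeff 0 ^ 2 = 1 := by rw [← sq_abs, ← hunit, one_pow]
    refine mahlerMeasure_add_one_le_cube_of_sq_eq_one hp hsq fun h ↦ ?_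
    have heval : p.reverse.eval 1 = p.eval 1 := by
      let _ : Invertible (1 : ℤ) := invertibleOne
      simpa using eval₂_reverse_mul_pow (RingHom.id ℤ) 1 p
    have hone : p.coeff 0 = 1 := by
      rw [h, eval_mul, eval_C] at heval
      exact mul_right_cancel₀ hp₁ (by rw [heval, one_mul])
    rw [hone, C_1, one_mul] at h
    exact hrev h
  · have hM : 2 ≤ (p.map (Int.castRingHom ℂ)).mahlerMeasure := by
      calc (2 : ℝ) ≤ |(p.coeff 0 : ℝ)| := by exact_mod_cast hlarge
        _ = ‖(p.map (Int.castRingHom ℂ)).coeff 0‖ := by simp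
        _ ≤ _ := by simpa using norm_coeff_le_choose_mul_mahlerMeasure 0 (p.map (Int.castRingHom ℂ))
    nlinarith [pow_le_pow_left₀ zero_le_two hM 2]

end Smyth

section Landau

lemma sum_sq_norm_coeff_mul_X_pow_add_C (p : ℂ[X]) (t : ℂ) :
    ∑ i ∈ Finset.range (p.natDegree + (p.natDegree + 1)),
        ‖(p * (X ^ p.natDegree + C t)).coeff i‖ ^ 2 =
      (1 + ‖t‖ ^ 2) * ∑ i ∈ Finset.range (p.natDegree + 1), ‖p.coeff i‖ ^ 2 +
        2 * (t * p.leadingCoeff * conj (p.coeff 0)).re := by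
  set n := p.natDegree
  have hlow : ∑ i ∈ Finset.range n, ‖(p * (X ^ n + C t)).coeff i‖ ^ 2 =
      ‖t‖ ^ 2 * ∑ i ∈ Finset.range n, ‖p.coeff i‖ ^ 2 := by
    rw [Finset.mul_sum]
    refine Finset.sum_congr rfl fun i hi ↦ ?_
    rw [mul_add, coeff_add, coeff_mul_X_pow', if_neg (Finset.mem_range.mp hi).not_ge, zero_add,
      coeff_mul_C, norm_mul, mul_pow, mul_comm]
  have hmid : ‖(p * (X ^ n + C t)).coeff n‖ ^ 2 = ‖p.coeff 0‖ ^ 2 +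
      ‖t‖ ^ 2 * ‖p.leadingCoeff‖ ^ 2 + 2 * (t * p.leadingCoeff * conj (p.coeff 0)).re := by
    rw [mul_add, coeff_add, coeff_mul_X_pow', if_pos le_rfl, Nat.sub_self, coeff_mul_C, add_comm,
      mul_comm, ← Complex.normSq_eq_norm_sq, Complex.normSq_add]
    simp only [Complex.normSq_eq_norm_sq, norm_mul, mul_pow]
    rw [coeff_natDegree]
    ring
  have hhigh : ∑ i ∈ Finset.range n, ‖(p * (X ^ n + C t)).coeff (n + (i + 1))‖ ^ 2 =
      ∑ i ∈ Finset.range n, ‖p.coeff (i + 1)‖ ^ 2 := by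
    refine Finset.sum_congr rfl fun i _ ↦ ?_
    rw [mul_add, coeff_add, add_comm n, coeff_mul_X_pow, coeff_mul_C,
      coeff_eq_zero_of_natDegree_lt (p := p) (n := i + 1 + n) (by omega), zero_mul, add_zero]
  have hlast := Finset.sum_range_succ (fun i ↦ ‖p.coeff i‖ ^ 2) n
  have hfirst := Finset.sum_range_succ' (fun i ↦ ‖p.coeff i‖ ^ 2) n
  rw [coeff_natDegree] at hlast
  rw [Finset.sum_range_add, hlow, Finset.sum_range_succ', add_zero, hhigh, hmid]
  linear_combination -hfirst - ‖t‖ ^ 2 * hlast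

lemma mahlerMeasure_sq_le_add_re {p : ℂ[X]} (hp : 0 < p.natDegree) (t : ℂ) :
    p.mahlerMeasure ^ 2 ≤
      (1 + ‖t‖ ^ 2) * ∑ i ∈ Finset.range (p.natDegree + 1), ‖p.coeff i‖ ^ 2 +
        2 * (t * p.leadingCoeff * conj (p.coeff 0)).re := by
  have hmonic : (X ^ p.natDegree + C t).Monic := monic_X_pow_add_C t hp.ne'
  have hone : 1 ≤ (X ^ p.natDegree + C t).mahlerMeasure :=
    one_le_mahlerMeasure_of_one_le_norm_leadingCoeff (by simp [hmonic.leadingCoeff])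
  have hdeg : (p * (X ^ p.natDegree + C t)).natDegree ≤ p.natDegree + p.natDegree :=
    natDegree_mul_le.trans (by rw [natDegree_X_pow_add_C])
  have hsupp : (p * (X ^ p.natDegree + C t)).support ⊆
      Finset.range (p.natDegree + (p.natDegree + 1)) := fun i hi ↦
    Finset.mem_range.mpr ((le_natDegree_of_mem_supp i hi).trans hdeg |>.trans_lt (by omega))
  calc p.mahlerMeasure ^ 2
      ≤ (p * (X ^ p.natDegree + C t)).mahlerMeasure ^ 2 := by
        rw [mahlerMeasure_mul]
        gcongr
        · exact mahlerMeasure_nonneg p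
        · exact le_mul_of_one_le_right (mahlerMeasure_nonneg p) hone
    _ ≤ ∑ i ∈ (p * (X ^ p.natDegree + C t)).support,
          ‖(p * (X ^ p.natDegree + C t)).coeff i‖ ^ 2 :=
        (Real.le_sqrt (mahlerMeasure_nonneg _) (by positivity)).mp
          (mahlerMeasure_le_sqrt_sum_sq_norm_coeff _)
    _ ≤ ∑ i ∈ Finset.range (p.natDegree + (p.natDegree + 1)),
          ‖(p * (X ^ p.natDegree + C t)).coeff i‖ ^ 2 :=
        Finset.sum_le_sum_of_subset_of_nonneg hsupp fun _ _ _ ↦ sq_nonneg _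
    _ = _ := sum_sq_norm_coeff_mul_X_pow_add_C p t

/-- Landau's inequality is strict: apply it to `p * (X ^ n + t)`, whose Mahler measure is not
smaller, with `t` chosen so that the overlapping coefficients `a₀` and `t aₙ` partly cancel. -/
theorem mahlerMeasure_sq_lt_sum_sq_norm_coeff {p : ℂ[X]} (hp₀ : p.coeff 0 ≠ 0)
    (hp : 0 < p.natDegree) :
    p.mahlerMeasure ^ 2 < ∑ i ∈ Finset.range (p.natDegree + 1), ‖p.coeff i‖ ^ 2 := by
  have hlc : p.leadingCoeff ≠ 0 := leadingCoeff_ne_zero.mpr fun h ↦ hp₀ (by simp [h])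
  have h := fun t ↦ mahlerMeasure_sq_le_add_re hp t
  set S := ∑ i ∈ Finset.range (p.natDegree + 1), ‖p.coeff i‖ ^ 2 with hS
  have hSpos : 0 < S := by
    rw [hS, Finset.sum_range_succ']
    positivity
  set w := p.leadingCoeff * conj (p.coeff 0) with hw
  have hw₀ : 0 < ‖w‖ ^ 2 := by
    rw [hw]
    simp [hlc, hp₀]
  have hre : (-conj w / S * p.leadingCoeff * conj (p.coeff 0)).re = -‖w‖ ^ 2 / S := by
    rw [mul_assoc, ← hw, div_mul_eq_mul_div, neg_mul, Complex.conj_mul', Complex.div_ofReal_re]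
    norm_cast
  have hnorm : ‖-conj w / (S : ℂ)‖ ^ 2 = ‖w‖ ^ 2 / S ^ 2 := by
    rw [norm_div, norm_neg, RCLike.norm_conj, Complex.norm_real, div_pow, Real.norm_eq_abs, sq_abs]
  calc p.mahlerMeasure ^ 2 ≤ (1 + ‖w‖ ^ 2 / S ^ 2) * S + 2 * (-‖w‖ ^ 2 / S) := by
        rw [← hnorm, ← hre]
        exact h _
    _ = S - ‖w‖ ^ 2 / S := by field_simp; ring
    _ < S := sub_lt_self S (by positivity)

theorem mahlerMeasure_lt_polyNorm2 {p : ℤ[X]} (hp₀ : p.coeff 0 ≠ 0) (hp : 0 < p.natDegree) :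
    (p.map (Int.castRingHom ℂ)).mahlerMeasure < polyNorm2 p := by
  have hdeg : (p.map (Int.castRingHom ℂ)).natDegree = p.natDegree :=
    natDegree_map_eq_of_injective (RingHom.injective_int _) p
  have h := mahlerMeasure_sq_lt_sum_sq_norm_coeff (p := p.map (Int.castRingHom ℂ))
    (by simpa using hp₀) (by rwa [hdeg])
  simp only [hdeg, coeff_map, eq_intCast, Complex.norm_intCast, sq_abs] at h
  exact Real.lt_sqrt_of_sq_lt h

end Landau

section Count

lemma le_of_cube_eq_add_one {θ M : ℝ} (hθ₁ : 1 < θ) (hθ : θ ^ 3 = θ + 1)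
    (hM : M + 1 ≤ M ^ 3) : θ ≤ M := by
  have hsq : 4 / 3 < θ ^ 2 := by
    by_contra! hle
    have hcube : θ * θ ^ 2 ≤ θ * (4 / 3) := by gcongr
    nlinarith
  have hquad : 0 < θ ^ 2 + θ * M + M ^ 2 - 1 := by linarith [sq_nonneg (θ / 2 + M)]
  have hprod : (θ - M) * (θ ^ 2 + θ * M + M ^ 2 - 1) ≤ 0 := by linarith
  exact sub_nonpos.mp (nonpos_of_mul_nonpos_left hprod hquad)

theorem pow_countNonReciprocal_le_mahlerMeasure {θ : ℝ} (hθ₁ : 1 < θ) (hθ : θ ^ 3 = θ + 1)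
    {F : Multiset ℤ[X]} (hF : ∀ g ∈ F, g.Monic) (hF₀ : F.prod.coeff 0 ≠ 0)
    (hF₁ : F.prod.eval 1 ≠ 0) :
    θ ^ countNonReciprocal F ≤ (F.prod.map (Int.castRingHom ℂ)).mahlerMeasure := by
  induction F using Multiset.induction_on with
  | empty => simp [countNonReciprocal]
  | cons g F ih =>
    rw [Multiset.prod_cons] at hF₀ hF₁ ⊢
    rw [mul_coeff_zero] at hF₀
    rw [eval_mul] at hF₁
    have hg : g.Monic := hF g (Multiset.mem_cons_self g F)
    have hg₁ := one_le_mahlerMeasure_of_ne_zero hg.ne_zero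
    specialize ih (fun q hq ↦ hF q (Multiset.mem_cons_of_mem hq)) (right_ne_zero_of_mul hF₀)
      (right_ne_zero_of_mul hF₁)
    rw [Polynomial.map_mul, mahlerMeasure_mul]
    by_cases hrev : g.reverse = g
    · rw [show countNonReciprocal (g ::ₘ F) = countNonReciprocal F by
        simp [countNonReciprocal, hrev]]
      exact ih.trans (le_mul_of_one_le_left (mahlerMeasure_nonneg _) hg₁)
    · rw [show countNonReciprocal (g ::ₘ F) = countNonReciprocal F + 1 by
        simp [countNonReciprocal, hrev], pow_succ']
      have hθg := le_of_cube_eq_add_one hθ₁ hθ (mahlerMeasure_add_one_le_cube hg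
        (left_ne_zero_of_mul hF₀) (left_ne_zero_of_mul hF₁) hrev)
      gcongr

theorem smyth_nonreciprocal_factors_general {F : Multiset ℤ[X]} (hF : ∀ g ∈ F, g.Monic)
    (hF₀ : F.prod.coeff 0 ≠ 0) (hF₁ : F.prod.eval 1 ≠ 0) (hne : F.prod ≠ 1) {θ₀ : ℝ}
    (hθ₁ : 1 < θ₀) (hθ : θ₀ ^ 3 = θ₀ + 1) :
    (countNonReciprocal F : ℝ) < Real.log (polyNorm2 F.prod) / Real.log θ₀ := by
  have hmonic : F.prod.Monic := by
    simpa only [id, Multiset.map_id'] using monic_multiset_prod_of_monic F id hF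
  have hθ₀ : 0 < θ₀ := zero_lt_one.trans hθ₁
  rw [lt_div_iff₀ (Real.log_pos hθ₁), ← Real.log_pow]
  exact Real.log_lt_log (pow_pos hθ₀ _)
    ((pow_countNonReciprocal_le_mahlerMeasure hθ₁ hθ hF hF₀ hF₁).trans_lt
      (mahlerMeasure_lt_polyNorm2 hF₀ (hmonic.natDegree_pos.mpr hne)))

end Count

section Digits

variable {β : ℝ}

lemma Titer_nonneg (β : ℝ) : ∀ j, 0 ≤ Titer β j
  | 0 => zero_le_one
  | _ + 1 => Int.fract_nonneg _

lemma Titer_le_one (β : ℝ) : ∀ j, Titer β j ≤ 1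
  | 0 => le_rfl
  | _ + 1 => (Int.fract_lt_one _).le

lemma tdigit_nonneg (hβ : 0 ≤ β) : ∀ i, 0 ≤ tdigit β i
  | 0 => le_rfl
  | i + 1 => Int.floor_nonneg.mpr (mul_nonneg hβ (Titer_nonneg β i))

lemma one_le_tdigit_one (hβ : 1 ≤ β) : 1 ≤ tdigit β 1 := by
  simpa [tdigit, Titer, Int.le_floor] using hβ

lemma Titer_eq_zero_of_forall_tdigit_eq_zero (hβ : 1 < β) {m : ℕ}
    (hm : ∀ i, m < i → tdigit β i = 0) : Titer β m = 0 := by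
  have hiter (j : ℕ) : Titer β (m + j) = β ^ j * Titer β m := by
    induction j with
    | zero => simp
    | succ j ih =>
      have hdigit : ⌊β * Titer β (m + j)⌋ = 0 := hm (m + j + 1) (by omega)
      rw [← add_assoc, Titer, Int.fract, hdigit, ih, Int.cast_zero, sub_zero, pow_succ', mul_assoc]
  by_contra hne
  have hpos : 0 < Titer β m := (Titer_nonneg β m).lt_of_ne' hne
  obtain ⟨j, hj⟩ := pow_unbounded_of_one_lt (1 / Titer β m) hβ
  rw [div_lt_iff₀ hpos, ← hiter] at hj
  exact (Titer_le_one β (m + j)).not_gt hj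

lemma exists_one_lt_tdigit_ne_zero (hβ : 1 < β) (hint : ∀ n : ℤ, (n : ℝ) ≠ β) :
    ∃ i, 1 < i ∧ tdigit β i ≠ 0 := by
  by_contra! h
  have hfract : Int.fract β = 0 := by
    simpa [Titer] using Titer_eq_zero_of_forall_tdigit_eq_zero hβ h
  obtain ⟨n, hn⟩ := Int.fract_eq_zero_iff.mp hfract
  exact hint n hn

end Digits

section ParryPolynomial

variable {β : ℝ}

lemma coeff_zero_sum_Icc_C_mul_X_pow {R : Type*} [Semiring R] (t : ℕ → R) {m : ℕ} (hm : 1 ≤ m) :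
    (∑ i ∈ Finset.Icc 1 m, C (t i) * X ^ (m - i)).coeff 0 = t m := by
  rw [finsetSum_coeff, Finset.sum_eq_single_of_mem m (Finset.right_mem_Icc.mpr hm)]
  · simp
  · intro i hi him
    have : m - i ≠ 0 := by grind
    simp [coeff_X_pow, this.symm]

lemma eval_one_simpleParryPoly (β : ℝ) (m : ℕ) :
    (simpleParryPoly β m).eval 1 = 1 - ∑ i ∈ Finset.Icc 1 m, tdigit β i := by
  simp [simpleParryPoly, eval_finsetSum]

lemma eval_one_nonsimpleParryPoly (β : ℝ) (m p : ℕ) :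
    (nonsimpleParryPoly β m p).eval 1 = -∑ i ∈ Finset.Ioc m (m + p + 1), tdigit β i := by
  have hsplit := Finset.sum_Ioc_consecutive (tdigit β) (Nat.zero_le m)
    (show m ≤ m + p + 1 by omega)
  simp only [← Finset.Icc_add_one_left_eq_Ioc, zero_add] at hsplit ⊢
  simp only [nonsimpleParryPoly, eval_add, eval_sub, eval_finsetSum, eval_mul, eval_C, eval_pow,
    eval_X, one_pow, mul_one]
  linear_combination hsplit

lemma coeff_zero_simpleParryPoly (β : ℝ) {m : ℕ} (hm : 1 ≤ m) :
    (simpleParryPoly β m).coeff 0 = -tdigit β m := by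
  rw [simpleParryPoly, coeff_sub, coeff_zero_sum_Icc_C_mul_X_pow _ hm, coeff_X_pow,
    if_neg (by omega), zero_sub]

lemma coeff_zero_nonsimpleParryPoly_zero (β : ℝ) (p : ℕ) :
    (nonsimpleParryPoly β 0 p).coeff 0 = -tdigit β (p + 1) - 1 := by
  rw [nonsimpleParryPoly, zero_add, coeff_add, coeff_sub, coeff_sub,
    coeff_zero_sum_Icc_C_mul_X_pow _ (Nat.le_add_left 1 p)]
  simp

lemma coeff_zero_nonsimpleParryPoly (β : ℝ) {m : ℕ} (hm : 1 ≤ m) (p : ℕ) :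
    (nonsimpleParryPoly β m p).coeff 0 = tdigit β m - tdigit β (m + p + 1) := by
  rw [nonsimpleParryPoly, coeff_add, coeff_sub, coeff_sub, coeff_zero_sum_Icc_C_mul_X_pow _ hm,
    coeff_zero_sum_Icc_C_mul_X_pow _ (show 1 ≤ m + p + 1 by omega), coeff_X_pow, coeff_X_pow,
    if_neg (by omega), if_neg (by omega)]
  ring

lemma coeff_zero_nonsimpleParryPoly_ne_zero (hβ : 0 ≤ β) {m p : ℕ}
    (hper : ∀ i, m + 1 ≤ i → tdigit β (i + (p + 1)) = tdigit β i)
    (hmin : ∀ m', m' < m → ¬ (∀ i, m' + 1 ≤ i → tdigit β (i + (p + 1)) = tdigit β i)) :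
    (nonsimpleParryPoly β m p).coeff 0 ≠ 0 := by
  rcases m.eq_zero_or_pos with rfl | hm
  · have := tdigit_nonneg hβ (p + 1)
    rw [coeff_zero_nonsimpleParryPoly_zero]
    omega
  · rw [coeff_zero_nonsimpleParryPoly β hm, sub_ne_zero]
    intro heq
    refine hmin (m - 1) (by omega) fun i hi ↦ ?_
    obtain rfl | hne := eq_or_ne i m
    · exact heq.symm
    · exact hper i (by omega)

lemma eval_one_nonsimpleParryPoly_neg (hβ : 0 ≤ β) {m p : ℕ}
    (hinf : ∀ N, ∃ i, N < i ∧ tdigit β i ≠ 0)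
    (hper : ∀ i, m + 1 ≤ i → tdigit β (i + (p + 1)) = tdigit β i) :
    (nonsimpleParryPoly β m p).eval 1 < 0 := by
  rw [eval_one_nonsimpleParryPoly, neg_lt_zero]
  refine (Finset.sum_nonneg fun i _ ↦ tdigit_nonneg hβ i).lt_of_ne' fun hsum ↦ ?_
  rw [Finset.sum_eq_zero_iff_of_nonneg fun i _ ↦ tdigit_nonneg hβ i] at hsum
  have hzero (i : ℕ) (hi : m < i) : tdigit β i = 0 := by
    induction i using Nat.strong_induction_on with
    | _ i ih =>
      by_cases hle : i ≤ m + p + 1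
      · exact hsum i (Finset.mem_Ioc.mpr ⟨hi, hle⟩)
      · have hshift := hper (i - (p + 1)) (by omega)
        rw [Nat.sub_add_cancel (by omega)] at hshift
        exact hshift.trans (ih _ (by omega) (by omega))
  obtain ⟨i, hi, hne⟩ := hinf m
  exact hne (hzero i hi)

lemma eval_one_simpleParryPoly_neg (hβ : 1 ≤ β) {m : ℕ} (hm : 1 < m) (htm : tdigit β m ≠ 0) :
    (simpleParryPoly β m).eval 1 < 0 := by
  have hnn := tdigit_nonneg (zero_le_one.trans hβ)
  have hpair : tdigit β 1 + tdigit β m ≤ ∑ i ∈ Finset.Icc 1 m, tdigit β i := by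
    rw [← Finset.sum_pair hm.ne]
    exact Finset.sum_le_sum_of_subset_of_nonneg (by grind) fun i _ _ ↦ hnn i
  rw [eval_one_simpleParryPoly]
  linarith [one_le_tdigit_one hβ, (hnn m).lt_of_ne' htm]

theorem IsParryPolyOf.coeff_zero_ne_zero {P : ℤ[X]} (hP : IsParryPolyOf β P) :
    P.coeff 0 ≠ 0 := by
  obtain ⟨hβ, -, ⟨m, hm, htm, -, rfl⟩ | ⟨-, m, p, hper, -, hmin, rfl⟩⟩ := hP
  · rwa [coeff_zero_simpleParryPoly β hm, neg_ne_zero]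
  · exact coeff_zero_nonsimpleParryPoly_ne_zero (zero_le_one.trans hβ.le) hper hmin

theorem IsParryPolyOf.eval_one_neg {P : ℤ[X]} (hP : IsParryPolyOf β P) : P.eval 1 < 0 := by
  obtain ⟨hβ, hint, ⟨m, -, htm, hzero, rfl⟩ | ⟨hinf, m, p, hper, -, -, rfl⟩⟩ := hP
  · obtain ⟨i, hi, hne⟩ := exists_one_lt_tdigit_ne_zero hβ hint
    have him : i ≤ m := not_lt.mp fun h ↦ hne (hzero i h)
    exact eval_one_simpleParryPoly_neg hβ.le (hi.trans_le him) htm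
  · exact eval_one_nonsimpleParryPoly_neg (zero_le_one.trans hβ.le) hinf hper

theorem IsParryPolyOf.ne_one {P : ℤ[X]} (hP : IsParryPolyOf β P) : P ≠ 1 := by
  rintro rfl
  exact absurd hP.eval_one_neg (by simp)

end ParryPolynomial

/-- For every Parry number `β`, the number of non-reciprocal irreducible factors (with
multiplicity) in the factorization of the Parry polynomial `n*_β` over `ℤ[X]` is
`< Log ‖n*_β‖₂ / Log θ₀`, where `θ₀` is the smallest Pisot number (the real root `> 1`
of `X³ - X - 1`). -/
theorem smyth_nonreciprocal_factors (β : ℝ) (P : Polynomial ℤ) (hP : IsParryPolyOf β P)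
    (θ₀ : ℝ) (hθ₁ : 1 < θ₀) (hθ : θ₀ ^ 3 = θ₀ + 1)
    (F : Multiset (Polynomial ℤ)) (hF : ∀ g ∈ F, g.Monic ∧ Irreducible g)
    (hprod : F.prod = P) :
    (countNonReciprocal F : ℝ) < Real.log (polyNorm2 P) / Real.log θ₀ := by
  subst hprod
  exact smyth_nonreciprocal_factors_general (fun g hg ↦ (hF g hg).1) hP.coeff_zero_ne_zero
    hP.eval_one_neg.ne hP.ne_one hθ₁ hθ

end
end

section
/- For every ε > 0 there exists a constant C(ε) > 0 such that for every Parry number β, the number s of distinct cyclotomic irreducible factors of the Parry polynomial n*_β satisfies s ≤ C(ε) · d_P^ε · N_m(n*_β), where d_P is the degree of n*_β and N_m(n*_β) is the number of nonzero coefficients (monomials) of n*_β. -/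
open Polynomial

noncomputable section

/-!
Suppose `Φ_n ∣ P` and fix an exponent `i` of `P`. For a unit `a` modulo `n`, the polynomial
`P * ∏ (X ^ (a * (n / p)) - 1)`, the product being over the primes `p ∣ n`, is a multiple of
`X ^ n - 1`, so its coefficients vanish once exponents are reduced modulo `n`. Each factor acts on
the reduced coefficients as a difference operator. Hence, unless another exponent of `P` is already
congruent to `i`, some exponent `j ≠ i` satisfies `i - j ≡ a * ∑_{p ∈ I} n / p` for a nonempty set
`I` of primes dividing `n`. The order `r` of `i - j` in `ℤ / n` is then `∏_{p ∈ I} p`, so `j`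
determines `I`, and determines `a` modulo `r`: it serves at most `φ(n) / φ(r)` units. Summing over
the units, `1 ≤ ∑_{j ≠ i} 1 / φ(r_n(i - j))`, where `r_n(k)` is the order of `k` in `ℤ / n`.

Now take `i = deg P` and sum over all `n` with `Φ_n ∣ P`. For a fixed difference `k = i - j`, a
given value `r` of `r_n(k) = n / gcd(n, k)` occurs for at most `τ(k)` values of `n`, and
`φ(r) ≤ deg P`. The bounds `τ(k) ≪ k ^ ε` and `∑_{φ(r) ≤ d} 1 / φ(r) ≪ d ^ ε` thus bound the
contribution of each exponent `j` by a constant times `(deg P) ^ (2 * ε)`.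
-/

section DivisorBound

variable {ε : ℝ}

lemma add_one_le_mul_pow {K x y : ℝ} (hK : 1 ≤ K) (hx : 0 ≤ x) (hKx : 1 ≤ K * x)
    (hxy : 1 + x ≤ y) (a : ℕ) : (a + 1 : ℝ) ≤ K * y ^ a :=
  calc (a + 1 : ℝ) ≤ a * (K * x) + K := by
        gcongr
        exact le_mul_of_one_le_right a.cast_nonneg hKx
    _ = K * (1 + a * x) := by ring
    _ ≤ K * (1 + x) ^ a := by
        gcongr
        exact one_add_mul_le_pow (by linarith) a
    _ ≤ K * y ^ a := by gcongr

lemma natCast_rpow_eq_prod_primeFactors {n : ℕ} (hn : n ≠ 0) (ε : ℝ) :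
    (n : ℝ) ^ ε = ∏ p ∈ n.primeFactors, ((p : ℝ) ^ ε) ^ n.factorization p := by
  have hn' : (n : ℝ) = ∏ p ∈ n.primeFactors, (p : ℝ) ^ n.factorization p := by
    exact_mod_cast (Nat.prod_factorization_pow_eq_self hn).symm
  rw [hn', ← Real.finsetProd_rpow _ _ fun p _ => by positivity]
  exact Finset.prod_congr rfl fun p _ => (Real.rpow_pow_comm p.cast_nonneg ε _).symm

lemma card_divisors_le_prod_mul_rpow {n : ℕ} (hn : n ≠ 0) {c : ℕ → ℝ}
    (hc : ∀ p, p.Prime → ∀ a : ℕ, (a + 1 : ℝ) ≤ c p * ((p : ℝ) ^ ε) ^ a) :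
    (n.divisors.card : ℝ) ≤ (∏ p ∈ n.primeFactors, c p) * (n : ℝ) ^ ε := by
  rw [Nat.card_divisors hn, natCast_rpow_eq_prod_primeFactors hn, ← Finset.prod_mul_distrib]
  push_cast
  exact Finset.prod_le_prod (fun _ _ => by positivity)
    fun p hp => hc p (Nat.prime_of_mem_primeFactors hp) _

theorem exists_card_divisors_le_mul_rpow (hε : 0 < ε) :
    ∃ K : ℝ, 0 < K ∧ ∀ n : ℕ, n ≠ 0 → (n.divisors.card : ℝ) ≤ K * (n : ℝ) ^ ε := by
  obtain ⟨B, hB⟩ := exists_nat_ge ((2 : ℝ) ^ ε⁻¹)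
  have hx : 0 < (2 : ℝ) ^ ε - 1 := sub_pos.mpr (Real.one_lt_rpow one_lt_two hε)
  set x : ℝ := 2 ^ ε - 1
  set K : ℝ := max 1 x⁻¹
  have hK : 1 ≤ K := le_max_left _ _
  have hKx : 1 ≤ K * x := (inv_le_iff_one_le_mul₀ hx).mp (le_max_right _ _)
  -- Only the finitely many primes with `p ^ ε < 2` need a constant larger than `1`.
  have local_bound (p : ℕ) (hp : p.Prime) (a : ℕ) :
      (a + 1 : ℝ) ≤ (if p < B then K else 1) * ((p : ℝ) ^ ε) ^ a := by
    split_ifs with hpB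
    · refine add_one_le_mul_pow hK hx.le hKx ?_ a
      rw [add_sub_cancel]
      gcongr
      exact_mod_cast hp.two_le
    · refine add_one_le_mul_pow le_rfl zero_le_one (by norm_num) ?_ a
      rw [one_add_one_eq_two, ← Real.rpow_inv_le_iff_of_pos two_pos.le p.cast_nonneg hε]
      exact hB.trans (by exact_mod_cast not_lt.mp hpB)
  refine ⟨K ^ B, by positivity, fun n hn => ?_⟩
  refine (card_divisors_le_prod_mul_rpow hn local_bound).trans ?_
  gcongr
  calc ∏ p ∈ n.primeFactors, (if p < B then K else 1)
      = K ^ (n.primeFactors.filter (· < B)).card := by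
        rw [← Finset.prod_filter, Finset.prod_const]
    _ ≤ K ^ (Finset.range B).card := by
        gcongr
        exact fun p hp => Finset.mem_range.mpr (Finset.mem_filter.mp hp).2
    _ = K ^ B := by rw [Finset.card_range]

end DivisorBound

section Totient

open Nat (totient)

lemma le_card_divisors_mul_totient (n : ℕ) : n ≤ n.divisors.card * totient n := by
  conv_lhs => rw [← Nat.sum_totient n]
  refine Finset.sum_le_card_nsmul _ _ _ fun d hd => ?_
  have hn := Nat.pos_of_ne_zero (Nat.mem_divisors.mp hd).2
  exact Nat.le_of_dvd (Nat.totient_pos.mpr hn)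
    (Nat.totient_dvd_of_dvd (Nat.dvd_of_mem_divisors hd))

lemma exists_rpow_one_sub_le_mul_totient {η : ℝ} (hη : 0 < η) :
    ∃ K : ℝ, 0 < K ∧ ∀ n : ℕ, n ≠ 0 → (n : ℝ) ^ (1 - η) ≤ K * totient n := by
  obtain ⟨K, hK0, hK⟩ := exists_card_divisors_le_mul_rpow hη
  refine ⟨K, hK0, fun n hn => ?_⟩
  have hn0 : (0 : ℝ) < n := by exact_mod_cast Nat.pos_of_ne_zero hn
  rw [Real.rpow_sub hn0, Real.rpow_one, div_le_iff₀ (by positivity)]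
  calc (n : ℝ) ≤ n.divisors.card * totient n := by
        exact_mod_cast le_card_divisors_mul_totient n
    _ ≤ K * (n : ℝ) ^ η * totient n := by gcongr; exact hK n hn
    _ = K * totient n * (n : ℝ) ^ η := by ring

theorem summable_totient_rpow_neg {s : ℝ} (hs : 1 < s) :
    Summable fun n : ℕ => (totient n : ℝ) ^ (-s) := by
  have hs0 : 0 < s := by linarith
  set η : ℝ := (s - 1) / (2 * s)
  have hη : 0 < η := div_pos (by linarith) (by positivity)
  have hηs : (1 - η) * s = (s + 1) / 2 := by simp only [η]; field_simp; ring
  obtain ⟨K, hK0, hK⟩ := exists_rpow_one_sub_le_mul_totient hη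
  have hsum : Summable fun n : ℕ => K ^ s * ((n : ℝ) ^ ((1 - η) * s))⁻¹ :=
    (Real.summable_nat_rpow_inv.mpr (by linarith)).mul_left _
  refine hsum.of_nonneg_of_le (fun n => by positivity) fun n => ?_
  rcases eq_or_ne n 0 with rfl | hn
  · rw [Nat.totient_zero, Nat.cast_zero, Real.zero_rpow (by linarith)]
    positivity
  have hn0 : (0 : ℝ) < n := by exact_mod_cast Nat.pos_of_ne_zero hn
  have hφ : (0 : ℝ) < totient n := by
    exact_mod_cast Nat.totient_pos.mpr (Nat.pos_of_ne_zero hn)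
  have hpow : (n : ℝ) ^ ((1 - η) * s) ≤ K ^ s * (totient n : ℝ) ^ s := by
    rw [Real.rpow_mul hn0.le, ← Real.mul_rpow hK0.le hφ.le]
    exact Real.rpow_le_rpow (by positivity) (hK n hn) hs0.le
  rw [Real.rpow_neg hφ.le, inv_le_iff_one_le_mul₀ (by positivity), mul_right_comm,
    ← div_eq_mul_inv, one_le_div (by positivity)]
  exact hpow

lemma finite_setOf_totient_le (d : ℕ) : {n : ℕ | 0 < n ∧ totient n ≤ d}.Finite := by
  have hsmall : ∀ᶠ n in Filter.cofinite, (totient n : ℝ) ^ (-2 : ℝ) < ((d : ℝ) + 1) ^ (-2 : ℝ) :=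
    (summable_totient_rpow_neg one_lt_two).tendsto_cofinite_zero.eventually_lt_const
      (by positivity)
  refine (Filter.eventually_cofinite.mp hsmall).subset fun n ⟨hn, hnd⟩ => ?_
  have hφ : (0 : ℝ) < totient n := by exact_mod_cast Nat.totient_pos.mpr hn
  have hle : (totient n : ℝ) ≤ d + 1 := by exact_mod_cast hnd.trans d.le_succ
  exact not_lt.mpr (Real.rpow_le_rpow_of_nonpos hφ hle (by norm_num))

lemma exists_sum_inv_totient_le_mul_rpow {ε : ℝ} (hε : 0 < ε) :
    ∃ C : ℝ, 0 < C ∧ ∀ (d : ℕ) (s : Finset ℕ), (∀ n ∈ s, 0 < n ∧ totient n ≤ d) →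
      ∑ n ∈ s, (totient n : ℝ)⁻¹ ≤ C * (d : ℝ) ^ ε := by
  have hsum := summable_totient_rpow_neg (s := 1 + ε) (by linarith)
  have hnonneg (n : ℕ) : 0 ≤ (totient n : ℝ) ^ (-(1 + ε)) := by positivity
  refine ⟨∑' n : ℕ, (totient n : ℝ) ^ (-(1 + ε)), hsum.tsum_pos hnonneg 1 (by simp),
    fun d s hs => ?_⟩
  calc ∑ n ∈ s, (totient n : ℝ)⁻¹ ≤ ∑ n ∈ s, (totient n : ℝ) ^ (-(1 + ε)) * (d : ℝ) ^ ε := by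
        refine Finset.sum_le_sum fun n hn => ?_
        have hφ : (0 : ℝ) < totient n := by exact_mod_cast Nat.totient_pos.mpr (hs n hn).1
        calc (totient n : ℝ)⁻¹ = (totient n : ℝ) ^ (-(1 + ε)) * (totient n : ℝ) ^ ε := by
              rw [← Real.rpow_add hφ, ← Real.rpow_neg_one]; ring_nf
          _ ≤ (totient n : ℝ) ^ (-(1 + ε)) * (d : ℝ) ^ ε := by
              gcongr
              exact_mod_cast (hs n hn).2
    _ = (∑ n ∈ s, (totient n : ℝ) ^ (-(1 + ε))) * (d : ℝ) ^ ε := (Finset.sum_mul ..).symm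
    _ ≤ (∑' n : ℕ, (totient n : ℝ) ^ (-(1 + ε))) * (d : ℝ) ^ ε := by
        gcongr
        exact hsum.sum_le_tsum s fun n _ => hnonneg n

end Totient

section AddOrder

lemma addOrderOf_sum_of_pairwise_coprime {ι A : Type*} [AddCommMonoid A] (s : Finset ι)
    (x : ι → A)
    (h : (s : Set ι).Pairwise fun i j => (addOrderOf (x i)).Coprime (addOrderOf (x j))) :
    addOrderOf (∑ i ∈ s, x i) = ∏ i ∈ s, addOrderOf (x i) := by
  classical
  induction s using Finset.induction_on with
  | empty => simp
  | insert a s ha ih =>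
    have ih := ih (h.mono (Finset.coe_subset.mpr (Finset.subset_insert a s)))
    rw [Finset.sum_insert ha, Finset.prod_insert ha, ← ih]
    refine (AddCommute.all _ _).addOrderOf_add_eq_mul_addOrderOf_of_coprime ?_
    rw [ih]
    refine Nat.Coprime.prod_right fun i hi => ?_
    exact h (Finset.mem_insert_self a s) (Finset.mem_insert_of_mem hi) fun hai => ha (hai ▸ hi)

lemma addOrderOf_units_mul {A : Type*} [Semiring A] (u : Aˣ) (x : A) :
    addOrderOf ((u : A) * x) = addOrderOf x :=
  addOrderOf_injective (AddMonoidHom.mulLeft (u : A)) u.isUnit.mul_right_injective x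

variable {n : ℕ} [NeZero n]

lemma zmod_addOrderOf_dvd (x : ZMod n) : addOrderOf x ∣ n := by
  simpa only [ZMod.card] using addOrderOf_dvd_card (x := x)

lemma addOrderOf_sum_div_primeFactors {I : Finset ℕ} (hI : I ⊆ n.primeFactors) :
    addOrderOf (∑ p ∈ I, ((n / p : ℕ) : ZMod n)) = ∏ p ∈ I, p := by
  have horder : ∀ p ∈ I, addOrderOf ((n / p : ℕ) : ZMod n) = p := fun p hp => by
    have hpn := Nat.dvd_of_mem_primeFactors (hI hp)
    rw [ZMod.addOrderOf_coe _ (NeZero.ne n), Nat.gcd_eq_right (Nat.div_dvd_of_dvd hpn),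
      Nat.div_div_self hpn (NeZero.ne n)]
  rw [addOrderOf_sum_of_pairwise_coprime, Finset.prod_congr rfl horder]
  intro p hp q hq hpq
  rw [horder p hp, horder q hq]
  exact (Nat.coprime_primes (Nat.prime_of_mem_primeFactors (hI hp))
    (Nat.prime_of_mem_primeFactors (hI hq))).mpr hpq

lemma castHom_addOrderOf_eq_zero {c x : ZMod n} (h : c * x = 0) :
    ZMod.castHom (zmod_addOrderOf_dvd x) (ZMod (addOrderOf x)) c = 0 := by
  rw [← ZMod.natCast_zmod_val c] at h ⊢
  rw [← nsmul_eq_mul, ← addOrderOf_dvd_iff_nsmul_eq_zero] at h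
  rwa [map_natCast, ZMod.natCast_eq_zero_iff]

lemma card_units_mul_eq_mul_totient_le (x w : ZMod n) :
    (Finset.univ.filter fun u : (ZMod n)ˣ => u * x = w).card * (addOrderOf x).totient ≤
      n.totient := by
  rcases (Finset.univ.filter fun u : (ZMod n)ˣ => u * x = w).eq_empty_or_nonempty with h | ⟨v, hv⟩
  · rw [h, Finset.card_empty, zero_mul]
    exact Nat.zero_le _
  have hr : addOrderOf x ∣ n := zmod_addOrderOf_dvd x
  have : NeZero (addOrderOf x) := ⟨ne_zero_of_dvd_ne_zero (NeZero.ne n) hr⟩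
  set f := ZMod.unitsMap hr
  have hf : Function.Surjective f := ZMod.unitsMap_surjective hr
  have hsub : (Finset.univ.filter fun u : (ZMod n)ˣ => u * x = w) ⊆
      Finset.univ.filter fun u => f u = f v := fun u hu => by
    have huvx : ((u : ZMod n) - v) * x = 0 := by
      rw [sub_mul, (Finset.mem_filter.mp hu).2, (Finset.mem_filter.mp hv).2, sub_self]
    have huv := castHom_addOrderOf_eq_zero huvx
    rw [map_sub, sub_eq_zero] at huv
    exact Finset.mem_filter.mpr ⟨Finset.mem_univ u, Units.ext huv⟩
  calc _ ≤ (Finset.univ.filter fun u => f u = f v).card * (addOrderOf x).totient := by gcongr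
    _ = ∑ y : (ZMod (addOrderOf x))ˣ, (Finset.univ.filter fun u => f u = y).card := by
        rw [Finset.sum_congr rfl fun y _ =>
          MonoidHom.card_fiber_eq_of_mem_range f (hf y) (hf (f v)), Finset.sum_const,
          Finset.card_univ, ZMod.card_units_eq_totient, smul_eq_mul, mul_comm]
    _ = Fintype.card (ZMod n)ˣ := (Finset.card_eq_sum_card_fiberwise fun _ _ => by simp).symm
    _ = n.totient := ZMod.card_units_eq_totient n

end AddOrder

section ResidueCoeff

variable {R : Type*} {n : ℕ}

section Semiring

variable [Semiring R]

/-- The sum of the coefficients of the monomials `X ^ j` with `j ≡ z (mod n)`, that is, the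
coefficient of `X ^ z` after reducing modulo `X ^ n - 1`. -/
def residueCoeff (n : ℕ) (z : ZMod n) : R[X] →ₗ[R] R :=
  Polynomial.lsum fun j => if (j : ZMod n) = z then LinearMap.id else 0

lemma residueCoeff_monomial (z : ZMod n) (j : ℕ) (a : R) :
    residueCoeff n z (monomial j a) = if (j : ZMod n) = z then a else 0 := by
  rw [residueCoeff, lsum_apply, sum_monomial_index]
  · split_ifs <;> rfl
  · exact map_zero _

lemma residueCoeff_eq_sum (z : ZMod n) (P : R[X]) :
    residueCoeff n z P = ∑ j ∈ P.support with ((j : ℕ) : ZMod n) = z, P.coeff j := by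
  conv_lhs => rw [P.as_sum_support]
  simp only [map_sum, residueCoeff_monomial, Finset.sum_filter]

lemma residueCoeff_mul_X_pow (z : ZMod n) (k : ℕ) (P : R[X]) :
    residueCoeff n z (P * X ^ k) = residueCoeff n (z - k) P := by
  induction P using Polynomial.induction_on' with
  | add P Q hP hQ => rw [add_mul, map_add, map_add, hP, hQ]
  | monomial j a =>
    simp only [monomial_mul_X_pow, residueCoeff_monomial, Nat.cast_add, eq_sub_iff_add_eq]

lemma exists_mem_support_of_residueCoeff_ne_zero {z : ZMod n} {P : R[X]}
    (h : residueCoeff n z P ≠ 0) : ∃ j ∈ P.support, ((j : ℕ) : ZMod n) = z := by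
  rw [residueCoeff_eq_sum] at h
  obtain ⟨j, hj, -⟩ := Finset.exists_ne_zero_of_sum_ne_zero h
  exact ⟨j, Finset.mem_filter.mp hj⟩

lemma exists_ne_mem_support_of_residueCoeff_eq_zero {P : R[X]} {i : ℕ} (hi : i ∈ P.support)
    (h : residueCoeff n i P = 0) : ∃ j ∈ P.support.erase i, ((j : ℕ) : ZMod n) = i := by
  by_contra! hne
  refine mem_support_iff.mp hi ?_
  rw [← h, residueCoeff_eq_sum]
  refine (Finset.sum_eq_single_of_mem (f := P.coeff) i (Finset.mem_filter.mpr ⟨hi, ?_⟩) ?_).symm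
  · rfl
  intro j hj hji
  obtain ⟨hj, hjz⟩ := Finset.mem_filter.mp hj
  exact absurd hjz (hne j (Finset.mem_erase.mpr ⟨hji, hj⟩))

end Semiring

section CommRing

variable [CommRing R]

lemma residueCoeff_mul_X_pow_sub_one (z : ZMod n) (k : ℕ) (P : R[X]) :
    residueCoeff n z (P * (X ^ k - 1)) = residueCoeff n (z - k) P - residueCoeff n z P := by
  rw [mul_sub, mul_one, map_sub, residueCoeff_mul_X_pow]

lemma residueCoeff_eq_zero_of_dvd (z : ZMod n) {P : R[X]} (h : X ^ n - 1 ∣ P) :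
    residueCoeff n z P = 0 := by
  obtain ⟨Q, rfl⟩ := h
  rw [mul_comm, residueCoeff_mul_X_pow_sub_one, ZMod.natCast_self, sub_zero, sub_self]

lemma exists_residueCoeff_sub_sum_ne_zero (s : Finset ℕ) (m : ℕ → ℕ) {z : ZMod n} {P : R[X]}
    (hz : residueCoeff n z P ≠ 0)
    (hP : ∀ y, residueCoeff n y (P * ∏ p ∈ s, (X ^ m p - 1)) = 0) :
    ∃ I ⊆ s, I.Nonempty ∧ residueCoeff n (z - ∑ p ∈ I, (m p : ZMod n)) P ≠ 0 := by
  induction s using Finset.induction_on generalizing P with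
  | empty => exact absurd (by simpa using hP z) hz
  | insert a s ha ih =>
    by_cases hza : residueCoeff n (z - m a) P = 0
    · have hz' : residueCoeff n z (P * (X ^ m a - 1)) ≠ 0 := by
        rwa [residueCoeff_mul_X_pow_sub_one, hza, zero_sub, neg_ne_zero]
      obtain ⟨I, hIs, hI, hne⟩ := ih hz' fun y => by
        simpa only [Finset.prod_insert ha, mul_assoc] using hP y
      rw [residueCoeff_mul_X_pow_sub_one] at hne
      by_cases hIz : residueCoeff n (z - ∑ p ∈ I, (m p : ZMod n)) P = 0
      · refine ⟨insert a I, Finset.insert_subset_insert a hIs, Finset.insert_nonempty a I, ?_⟩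
        rw [hIz, sub_zero] at hne
        rwa [Finset.sum_insert fun haI => ha (hIs haI), add_comm, ← sub_sub]
      · exact ⟨I, hIs.trans (Finset.subset_insert a s), hI, hIz⟩
    · exact ⟨{a}, by simp, Finset.singleton_nonempty a, by rwa [Finset.sum_singleton]⟩

end CommRing

end ResidueCoeff

section Cyclotomic

lemma X_pow_sub_one_dvd_cyclotomic_mul_prod_rat {n : ℕ} (hn : n ≠ 0) (m : ℕ → ℕ)
    (hm : ∀ p ∈ n.primeFactors, n / p ∣ m p) :
    (X ^ n - 1 : ℚ[X]) ∣ cyclotomic n ℚ * ∏ p ∈ n.primeFactors, (X ^ m p - 1) := by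
  rw [← prod_cyclotomic_eq_X_pow_sub_one (Nat.pos_of_ne_zero hn)]
  refine Finset.prod_dvd_of_coprime (fun a _ b _ hab => cyclotomic.isCoprime_rat hab) ?_
  intro d hd
  obtain rfl | hdn := eq_or_ne d n
  · exact dvd_mul_right _ _
  obtain ⟨p, hp, hdp⟩ : ∃ p ∈ n.primeFactors, d ∣ n / p := by
    obtain ⟨e, rfl⟩ := Nat.dvd_of_mem_divisors hd
    obtain ⟨p, hp, f, rfl⟩ := Nat.exists_prime_and_dvd fun he : e = 1 => hdn (by rw [he, mul_one])
    refine ⟨p, Nat.mem_primeFactors.mpr ⟨hp, ⟨d * f, by ring⟩, hn⟩, f, ?_⟩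
    exact Nat.div_eq_of_eq_mul_left hp.pos (by ring)
  calc cyclotomic d ℚ ∣ X ^ d - 1 := cyclotomic.dvd_X_pow_sub_one d ℚ
    _ ∣ X ^ m p - 1 := dvd_pow_sub_one_of_dvd (hdp.trans (hm p hp))
    _ ∣ ∏ p ∈ n.primeFactors, (X ^ m p - 1) := Finset.dvd_prod_of_mem _ hp
    _ ∣ _ := dvd_mul_left _ _

lemma X_pow_sub_one_dvd_cyclotomic_mul_prod (R : Type*) [CommRing R] {n : ℕ} (hn : n ≠ 0)
    (m : ℕ → ℕ) (hm : ∀ p ∈ n.primeFactors, n / p ∣ m p) :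
    (X ^ n - 1 : R[X]) ∣ cyclotomic n R * ∏ p ∈ n.primeFactors, (X ^ m p - 1) := by
  have hint : (X ^ n - 1 : ℤ[X]) ∣ cyclotomic n ℤ * ∏ p ∈ n.primeFactors, (X ^ m p - 1) := by
    have hmonic : (X ^ n - 1 : ℤ[X]).Monic := by simpa using monic_X_pow_sub_C (1 : ℤ) hn
    rw [← map_dvd_map (Int.castRingHom ℚ) Int.cast_injective hmonic]
    simpa [Polynomial.map_prod] using X_pow_sub_one_dvd_cyclotomic_mul_prod_rat hn m hm
  simpa [Polynomial.map_prod] using Polynomial.map_dvd (Int.castRingHom R) hint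

end Cyclotomic

section Averaging

variable {n : ℕ} [NeZero n]

/-- The units `a` modulo `n` such that `w` is a sum of distinct terms among the `a * (n / p)`,
where `p` runs over the prime factors of `n`. -/
def subsetSumUnits (w : ZMod n) : Finset (ZMod n)ˣ :=
  Finset.univ.filter fun a => ∃ I ⊆ n.primeFactors, a * ∑ p ∈ I, ((n / p : ℕ) : ZMod n) = w

lemma mem_subsetSumUnits {w : ZMod n} {a : (ZMod n)ˣ} : a ∈ subsetSumUnits w ↔
    ∃ I ⊆ n.primeFactors, a * ∑ p ∈ I, ((n / p : ℕ) : ZMod n) = w := by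
  simp only [subsetSumUnits, Finset.mem_filter_univ]

lemma card_subsetSumUnits_mul_totient_le (w : ZMod n) :
    (subsetSumUnits w).card * (addOrderOf w).totient ≤ n.totient := by
  have horder {a : (ZMod n)ˣ} {I : Finset ℕ} (hI : I ⊆ n.primeFactors)
      (ha : a * ∑ p ∈ I, ((n / p : ℕ) : ZMod n) = w) : addOrderOf w = ∏ p ∈ I, p := by
    rw [← ha, addOrderOf_units_mul, addOrderOf_sum_div_primeFactors hI]
  have hset {a : (ZMod n)ˣ} {I : Finset ℕ} (hI : I ⊆ n.primeFactors)
      (ha : a * ∑ p ∈ I, ((n / p : ℕ) : ZMod n) = w) : I = (addOrderOf w).primeFactors := by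
    rw [horder hI ha, Nat.primeFactors_prod fun p hp => Nat.prime_of_mem_primeFactors (hI hp)]
  rcases (subsetSumUnits w).eq_empty_or_nonempty with h | ⟨a, ha⟩
  · rw [h, Finset.card_empty, zero_mul]
    exact Nat.zero_le _
  obtain ⟨I, hI, ha⟩ := mem_subsetSumUnits.mp ha
  have hsub : subsetSumUnits w ⊆
      Finset.univ.filter fun b => b * ∑ p ∈ I, ((n / p : ℕ) : ZMod n) = w := fun b hb => by
    obtain ⟨J, hJ, hb⟩ := mem_subsetSumUnits.mp hb
    rw [hset hJ hb, ← hset hI ha] at hb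
    exact Finset.mem_filter.mpr ⟨Finset.mem_univ b, hb⟩
  calc (subsetSumUnits w).card * (addOrderOf w).totient
      ≤ _ * (addOrderOf (∑ p ∈ I, ((n / p : ℕ) : ZMod n))).totient := by
        rw [horder hI ha, addOrderOf_sum_div_primeFactors hI]
        exact Nat.mul_le_mul_right _ (Finset.card_le_card hsub)
    _ ≤ n.totient := card_units_mul_eq_mul_totient_le _ w

variable {R : Type*} [CommRing R] {P : R[X]} {i : ℕ}

lemma exists_mem_subsetSumUnits_of_cyclotomic_dvd (hdvd : cyclotomic n R ∣ P)
    (hi : residueCoeff n i P ≠ 0) (a : (ZMod n)ˣ) :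
    ∃ j ∈ P.support.erase i, a ∈ subsetSumUnits (i - j : ZMod n) := by
  set m : ℕ → ℕ := fun p => (a : ZMod n).val * (n / p)
  have hm (I : Finset ℕ) : ∑ p ∈ I, (m p : ZMod n) = a * ∑ p ∈ I, ((n / p : ℕ) : ZMod n) := by
    simp only [m, Nat.cast_mul, ZMod.natCast_zmod_val, Finset.mul_sum]
  have hmul : X ^ n - 1 ∣ P * ∏ p ∈ n.primeFactors, (X ^ m p - 1) :=
    (X_pow_sub_one_dvd_cyclotomic_mul_prod R (NeZero.ne n) m fun p _ => dvd_mul_left _ _).trans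
      (mul_dvd_mul_right hdvd _)
  obtain ⟨I, hI, ⟨p, hp⟩, hcoeff⟩ := exists_residueCoeff_sub_sum_ne_zero n.primeFactors m hi
    fun y => residueCoeff_eq_zero_of_dvd y hmul
  obtain ⟨j, hj, hji⟩ := exists_mem_support_of_residueCoeff_ne_zero hcoeff
  have hsum : a * ∑ p ∈ I, ((n / p : ℕ) : ZMod n) = i - j := by
    rw [hji, hm, sub_sub_cancel]
  refine ⟨j, Finset.mem_erase.mpr ⟨?_, hj⟩, mem_subsetSumUnits.mpr ⟨I, hI, hsum⟩⟩
  rintro rfl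
  have horder : ∏ p ∈ I, p = 1 := by
    rw [← addOrderOf_sum_div_primeFactors hI, ← addOrderOf_units_mul a, hsum, sub_self,
      addOrderOf_zero]
  exact (Nat.prime_of_mem_primeFactors (hI hp)).ne_one
    (Nat.eq_one_of_dvd_one (horder ▸ Finset.dvd_prod_of_mem _ hp))

lemma totient_le_sum_card_subsetSumUnits (hdvd : cyclotomic n R ∣ P)
    (hi : residueCoeff n i P ≠ 0) :
    n.totient ≤ ∑ j ∈ P.support.erase i, (subsetSumUnits (i - j : ZMod n)).card := by
  rw [← ZMod.card_units_eq_totient, ← Finset.card_univ]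
  refine (Finset.card_le_card fun a _ => ?_).trans Finset.card_biUnion_le
  exact Finset.mem_biUnion.mpr (exists_mem_subsetSumUnits_of_cyclotomic_dvd hdvd hi a)

theorem one_le_sum_inv_totient_addOrderOf_of_cyclotomic_dvd (hdvd : cyclotomic n R ∣ P)
    (hi : i ∈ P.support) :
    1 ≤ ∑ j ∈ P.support.erase i, ((addOrderOf (i - j : ZMod n)).totient : ℝ)⁻¹ := by
  by_cases hcoeff : residueCoeff n i P = 0
  · obtain ⟨j, hj, hji⟩ := exists_ne_mem_support_of_residueCoeff_eq_zero hi hcoeff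
    calc (1 : ℝ) = ((addOrderOf (i - j : ZMod n)).totient : ℝ)⁻¹ := by simp [hji]
      _ ≤ _ := Finset.single_le_sum
          (f := fun j : ℕ => ((addOrderOf (i - j : ZMod n)).totient : ℝ)⁻¹)
          (fun _ _ => by positivity) hj
  have hn : (0 : ℝ) < n.totient := by
    exact_mod_cast Nat.totient_pos.mpr (Nat.pos_of_ne_zero (NeZero.ne n))
  have hcard (w : ZMod n) :
      ((subsetSumUnits w).card : ℝ) ≤ n.totient * ((addOrderOf w).totient : ℝ)⁻¹ := by
    have hw : (0 : ℝ) < (addOrderOf w).totient := by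
      exact_mod_cast Nat.totient_pos.mpr (addOrderOf_pos w)
    rw [← div_eq_mul_inv, le_div_iff₀ hw]
    exact_mod_cast card_subsetSumUnits_mul_totient_le w
  refine le_of_mul_le_mul_left ?_ hn
  calc (n.totient : ℝ) * 1
      ≤ ∑ j ∈ P.support.erase i, ((subsetSumUnits (i - j : ZMod n)).card : ℝ) := by
        rw [mul_one]
        exact_mod_cast totient_le_sum_card_subsetSumUnits hdvd hcoeff
    _ ≤ ∑ j ∈ P.support.erase i,
          n.totient * ((addOrderOf (i - j : ZMod n)).totient : ℝ)⁻¹ :=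
        Finset.sum_le_sum fun j _ => hcard _
    _ = _ := (Finset.mul_sum ..).symm

theorem one_le_sum_inv_totient_addOrderOf_natDegree_sub (hdvd : cyclotomic n R ∣ P) (hP : P ≠ 0) :
    1 ≤ ∑ j ∈ P.support.erase P.natDegree,
      ((addOrderOf ((P.natDegree - j : ℕ) : ZMod n)).totient : ℝ)⁻¹ := by
  refine (one_le_sum_inv_totient_addOrderOf_of_cyclotomic_dvd hdvd
    (natDegree_mem_support_of_nonzero hP)).trans_eq (Finset.sum_congr rfl fun j hj => ?_)
  rw [Nat.cast_sub (le_natDegree_of_mem_supp j (Finset.mem_of_mem_erase hj))]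

end Averaging

section Counting

lemma sum_addOrderOf_natCast_le {f : ℕ → ℝ} (hf : ∀ r, 0 ≤ f r) {k : ℕ} (hk : k ≠ 0)
    {F G : Finset ℕ} (hFG : ∀ n ∈ F, addOrderOf (k : ZMod n) ∈ G) :
    ∑ n ∈ F, f (addOrderOf (k : ZMod n)) ≤ k.divisors.card * ∑ r ∈ G, f r := by
  set g : ℕ → ℕ × ℕ := fun n => (n.gcd k, addOrderOf (k : ZMod n))
  have hmul (n : ℕ) : (g n).1 * (g n).2 = n := by
    simp only [g, ZMod.addOrderOf_coe' n hk, Nat.mul_div_cancel' (Nat.gcd_dvd_left n k)]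
  have hg : g.Injective := fun a b hab => by rw [← hmul a, hab, hmul]
  have himage : F.image g ⊆ k.divisors ×ˢ G := Finset.image_subset_iff.mpr fun n hn =>
    Finset.mk_mem_product (Nat.mem_divisors.mpr ⟨Nat.gcd_dvd_right n k, hk⟩) (hFG n hn)
  calc ∑ n ∈ F, f (addOrderOf (k : ZMod n)) = ∑ x ∈ F.image g, f x.2 :=
        (Finset.sum_image (f := fun x => f x.2) hg.injOn).symm
    _ ≤ ∑ x ∈ k.divisors ×ˢ G, f x.2 :=
        Finset.sum_le_sum_of_subset_of_nonneg himage fun x _ _ => hf x.2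
    _ = k.divisors.card * ∑ r ∈ G, f r := by
        simp only [Finset.sum_product, Finset.sum_const, nsmul_eq_mul]

theorem exists_sum_inv_totient_addOrderOf_le {ε : ℝ} (hε : 0 < ε) :
    ∃ C : ℝ, 0 < C ∧ ∀ (d : ℕ) (F : Finset ℕ), (∀ n ∈ F, 0 < n ∧ n.totient ≤ d) →
      ∀ k : ℕ, k ≠ 0 → k ≤ d →
        ∑ n ∈ F, ((addOrderOf (k : ZMod n)).totient : ℝ)⁻¹ ≤ C * (d : ℝ) ^ ε := by
  obtain ⟨K, hK0, hK⟩ := exists_card_divisors_le_mul_rpow (half_pos hε)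
  obtain ⟨C, hC0, hC⟩ := exists_sum_inv_totient_le_mul_rpow (half_pos hε)
  refine ⟨K * C, by positivity, fun d F hF k hk hkd => ?_⟩
  set G := (finite_setOf_totient_le d).toFinset
  have hG : ∀ r ∈ G, 0 < r ∧ r.totient ≤ d := fun r hr => by simpa [G] using hr
  have hFG : ∀ n ∈ F, addOrderOf (k : ZMod n) ∈ G := fun n hn => by
    obtain ⟨hn0, hnd⟩ := hF n hn
    have : NeZero n := ⟨hn0.ne'⟩
    have hle := Nat.le_of_dvd (Nat.totient_pos.mpr hn0)
      (Nat.totient_dvd_of_dvd (zmod_addOrderOf_dvd (k : ZMod n)))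
    exact (Set.Finite.mem_toFinset _).mpr ⟨addOrderOf_pos _, hle.trans hnd⟩
  calc ∑ n ∈ F, ((addOrderOf (k : ZMod n)).totient : ℝ)⁻¹
      ≤ k.divisors.card * ∑ r ∈ G, (r.totient : ℝ)⁻¹ :=
        sum_addOrderOf_natCast_le (f := fun r => (r.totient : ℝ)⁻¹) (fun _ => by positivity)
          hk hFG
    _ ≤ K * (d : ℝ) ^ (ε / 2) * (C * (d : ℝ) ^ (ε / 2)) := by
        gcongr
        · exact (hK k hk).trans (by gcongr)
        · exact hC d G hG
    _ = K * C * (d : ℝ) ^ ε := by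
        rw [mul_mul_mul_comm, ← Real.rpow_add_of_nonneg d.cast_nonneg (half_pos hε).le
          (half_pos hε).le, add_halves]

lemma totient_le_natDegree_of_cyclotomic_dvd {R : Type*} [CommRing R] {n : ℕ} {P : R[X]}
    (hP : P ≠ 0) (h : cyclotomic n R ∣ P) : n.totient ≤ P.natDegree := by
  have := Polynomial.nontrivial_iff.mp (nontrivial_of_ne P 0 hP)
  rw [← natDegree_cyclotomic n R]
  by_contra! hlt
  exact (cyclotomic.monic n R).not_dvd_of_natDegree_lt hP hlt h

theorem pinner_vaaler_cyclotomic_factors_general (ε : ℝ) (hε : 0 < ε) :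
    ∃ Cε : ℝ, 0 < Cε ∧ ∀ {R : Type*} [CommRing R] (P : R[X]), P ≠ 0 →
      (Set.ncard {n : ℕ | 1 ≤ n ∧ cyclotomic n R ∣ P} : ℝ) ≤
        Cε * (P.natDegree : ℝ) ^ ε * P.support.card := by
  obtain ⟨C, hC0, hC⟩ := exists_sum_inv_totient_addOrderOf_le hε
  refine ⟨C, hC0, fun {R} _ P hP => ?_⟩
  set d := P.natDegree
  have htotient : ∀ n ∈ {n : ℕ | 1 ≤ n ∧ cyclotomic n R ∣ P}, 0 < n ∧ n.totient ≤ d :=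
    fun n hn => ⟨hn.1, totient_le_natDegree_of_cyclotomic_dvd hP hn.2⟩
  have hfin := (finite_setOf_totient_le d).subset htotient
  set F := hfin.toFinset
  have hF {n : ℕ} : n ∈ F ↔ 1 ≤ n ∧ cyclotomic n R ∣ P := hfin.mem_toFinset
  have hexp {j : ℕ} (hj : j ∈ P.support.erase d) :
      ∑ n ∈ F, ((addOrderOf ((d - j : ℕ) : ZMod n)).totient : ℝ)⁻¹ ≤ C * (d : ℝ) ^ ε := by
    obtain ⟨hjd, hj⟩ := Finset.mem_erase.mp hj
    have hlt := (le_natDegree_of_mem_supp j hj).lt_of_ne hjd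
    exact hC d F (fun n hn => htotient n (hF.mp hn)) _ (Nat.sub_pos_of_lt hlt).ne' (d.sub_le j)
  rw [Set.ncard_eq_toFinset_card _ hfin]
  calc (F.card : ℝ)
      ≤ ∑ n ∈ F, ∑ j ∈ P.support.erase d,
          ((addOrderOf ((d - j : ℕ) : ZMod n)).totient : ℝ)⁻¹ := by
        rw [← nsmul_one]
        refine Finset.card_nsmul_le_sum _ _ _ fun n hn => ?_
        have : NeZero n := ⟨Nat.one_le_iff_ne_zero.mp (hF.mp hn).1⟩
        exact one_le_sum_inv_totient_addOrderOf_natDegree_sub (hF.mp hn).2 hP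
    _ = ∑ j ∈ P.support.erase d, ∑ n ∈ F,
          ((addOrderOf ((d - j : ℕ) : ZMod n)).totient : ℝ)⁻¹ := Finset.sum_comm
    _ ≤ (P.support.erase d).card • (C * (d : ℝ) ^ ε) :=
        Finset.sum_le_card_nsmul _ _ _ fun j hj => hexp hj
    _ ≤ C * (d : ℝ) ^ ε * P.support.card := by
        rw [nsmul_eq_mul, mul_comm]
        gcongr
        exact Finset.erase_subset d P.support

end Counting

section ParryPolynomial

lemma sum_C_mul_X_pow_mem_degreeLT {R : Type*} [Semiring R] (t : ℕ → R) (N : ℕ) :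
    ∑ i ∈ Finset.Icc 1 N, C (t i) * X ^ (N - i) ∈ degreeLT R N := by
  refine sum_mem fun i hi => mem_degreeLT.mpr ?_
  have hi := Finset.mem_Icc.mp hi
  exact (degree_C_mul_X_pow_le _ _).trans_lt (by exact_mod_cast (by omega : N - i < N))

lemma simpleParryPoly_monic (β : ℝ) (m : ℕ) : (simpleParryPoly β m).Monic :=
  monic_X_pow_sub (mem_degreeLT.mp (sum_C_mul_X_pow_mem_degreeLT _ m))

lemma nonsimpleParryPoly_monic (β : ℝ) (m p : ℕ) : (nonsimpleParryPoly β m p).Monic := by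
  rw [nonsimpleParryPoly, sub_sub, sub_add]
  refine monic_X_pow_sub (mem_degreeLT.mp (sub_mem (add_mem ?_ ?_) ?_))
  · exact sum_C_mul_X_pow_mem_degreeLT _ _
  · rw [mem_degreeLT, degree_X_pow]
    exact_mod_cast (by omega : m < m + p + 1)
  · exact degreeLT_mono (by omega) (sum_C_mul_X_pow_mem_degreeLT _ m)

lemma IsParryPolyOf.monic {β : ℝ} {P : ℤ[X]} (h : IsParryPolyOf β P) : P.Monic := by
  obtain ⟨-, -, ⟨m, -, -, -, rfl⟩ | ⟨-, m, p, -, -, -, rfl⟩⟩ := h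
  · exact simpleParryPoly_monic β m
  · exact nonsimpleParryPoly_monic β m p

end ParryPolynomial

/-- For every `ε > 0` there is a constant `C(ε) > 0` such that for every Parry number
`β`, the number `s` of distinct cyclotomic irreducible factors of the Parry polynomial
`n*_β` satisfies `s ≤ C(ε)·d_P^ε·N_m(n*_β)`, where `N_m(n*_β)` is the number of nonzero
monomials of `n*_β`. -/
theorem pinner_vaaler_cyclotomic_factors (ε : ℝ) (hε : 0 < ε) :
    ∃ Cε : ℝ, 0 < Cε ∧ ∀ (β : ℝ) (P : Polynomial ℤ), IsParryPolyOf β P →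
      ((Set.ncard {n : ℕ | 1 ≤ n ∧ Polynomial.cyclotomic n ℤ ∣ P}) : ℝ) ≤
        Cε * ((P.natDegree : ℝ) ^ ε) * (P.support.card : ℝ) := by
  obtain ⟨C, hC0, hC⟩ := pinner_vaaler_cyclotomic_factors_general ε hε
  exact ⟨C, hC0, fun β P hP => hC P hP.monic.ne_zero⟩

end
end
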